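/- Let (A, φ) be a noncommutative probability space with monotone cumulants {h_n}. Then for every n ≥ 1 and all a_1,…,a_n ∈ A, h_n(a_1,…,a_n) = Σ_{π∈NC(n)} α(π) · φ_π(a_1,…,a_n), where for each π ∈ NC(n) the coefficient is α(π) = Σ_{t ∈ ST(n), π(t) = π} ω(sk(t)). -/

import Mathlib

open scoped BigOperators

/-- Planar rooted trees (rose trees). -/
inductive PTree : Type
  | node : List PTree → PTree

namespace PTree

/-- The single-vertex tree (a leaf). -/
abbrev leaf : PTree := .node []

/-- Subtree at a given path from the root (entries select children). -/
def subtreeAt : List ℕ → PTree → Option PTree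
  | [], t => some t
  | i :: p, node cs => (cs[i]?).bind (subtreeAt p)

/-- `p` is (the path of) a vertex of `t`. -/
def IsVertex (t : PTree) (p : List ℕ) : Prop := (subtreeAt p t).isSome

/-- `p` is a leaf of `t`. -/
def IsLeafAt (t : PTree) (p : List ℕ) : Prop := subtreeAt p t = some leaf

/-- `p` is an internal (non-leaf) vertex of `t`. -/
def IsInternalAt (t : PTree) (p : List ℕ) : Prop :=
  ∃ cs, subtreeAt p t = some (node cs) ∧ cs ≠ []

/-- Schröder trees: every internal vertex has at least two children. -/
inductive IsSchroder : PTree → Prop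
  | leaf : IsSchroder (node [])
  | node (cs : List PTree) : 2 ≤ cs.length → (∀ c ∈ cs, IsSchroder c) → IsSchroder (node cs)

/-- Number of leaves of a tree. -/
noncomputable def numLeaves (t : PTree) : ℕ := Nat.card {p : List ℕ // IsLeafAt t p}

/-- Number of sectors between consecutive leaves. -/
noncomputable def numSectors (t : PTree) : ℕ := numLeaves t - 1

/-- Number of internal vertices. -/
noncomputable def numInternal (t : PTree) : ℕ := Nat.card {p : List ℕ // IsInternalAt t p}

/-- The set of Schröder trees with `n+1` leaves. -/
def ST (n : ℕ) : Set PTree := {t | IsSchroder t ∧ numLeaves t = n + 1}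

/-- Number of surjective strictly order-preserving maps from the poset of internal
vertices of `t` (i.e. the vertex poset of the skeleton `sk(t)`, with the root minimal,
the order being the ancestor/prefix order) onto `{1, …, k}`. This is `ω_k(sk(t))`. -/
noncomputable def omegaSkK (t : PTree) (k : ℕ) : ℕ :=
  Nat.card {f : {p : List ℕ // IsInternalAt t p} → Fin k //
    Function.Surjective f ∧ ∀ v w, v.1 <+: w.1 → v ≠ w → f v < f w}

/-- The Murua coefficient `ω(sk(t))` of the skeleton of `t`. -/
noncomputable def omegaSk (t : PTree) : ℂ :=
  ∑ k ∈ Finset.Icc 1 (numInternal t), ((-1 : ℂ) ^ (k + 1) / (k : ℂ)) * (omegaSkK t k : ℂ)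

/-- The subtree of `t` at path `p` (junk value: a leaf). -/
noncomputable def subtree! (t : PTree) (p : List ℕ) : PTree := (subtreeAt p t).getD leaf

/-- Number of leaves of `t` strictly to the left of the subtree at `p`. -/
noncomputable def leavesBefore (t : PTree) (p : List ℕ) : ℕ :=
  Nat.card {q : List ℕ // IsLeafAt t q ∧ List.Lex (· < ·) q p ∧ ¬ p <+: q}

/-- Sector number `i` (0-indexed: the sector between the `(i+1)`-st and `(i+2)`-nd leaves of `t`)
lies strictly inside the subtree of `t` rooted at `p`. -/
def SectorIn (t : PTree) (p : List ℕ) (i : ℕ) : Prop :=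
  leavesBefore t p ≤ i ∧ i + 2 ≤ leavesBefore t p + numLeaves (subtree! t p)

/-- The internal vertex `v` of `t` owns sector `i`: the sector lies in the corolla at `v`,
i.e. inside the subtree at `v` but not inside the subtree at any strictly deeper vertex. -/
def OwnsSector (t : PTree) (v : List ℕ) (i : ℕ) : Prop :=
  IsInternalAt t v ∧ SectorIn t v i ∧
    ∀ w, IsInternalAt t w → v <+: w → w ≠ v → ¬ SectorIn t w i

/-- Sectors `i` and `j` belong to the same block of the noncrossing partition `π(t)`. -/
def SameOwner (t : PTree) (i j : ℕ) : Prop := ∃ v, OwnsSector t v i ∧ OwnsSector t v j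

open Classical in
/-- `φ_{π(t)}(a_1,…,a_n)`: the product over the blocks of the noncrossing partition `π(t)`
(one block per internal vertex `v`, consisting of the sectors owned by `v`) of `φ` applied to
the ordered product of the corresponding letters of `w`. -/
noncomputable def phiPi {A : Type*} [Ring A] (φ : A → ℂ) (t : PTree) (w : List A) : ℂ :=
  ∏ᶠ v ∈ {v : List ℕ | IsInternalAt t v},
    φ ((((List.range w.length).filter fun i => OwnsSector t v i).map fun i => w.getD i 0).prod)

/-- A corolla: a root whose (at least two) children are all leaves. -/
def corolla (m : ℕ) : PTree := node (List.replicate m leaf)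

/-- `t` is a corolla. -/
def IsCorolla (t : PTree) : Prop := ∃ m, 2 ≤ m ∧ t = corolla m

/-- Graft a tree `s` onto the leftmost leaf of `t`. -/
def graftLeftmost : PTree → PTree → PTree
  | node [], s => s
  | node (c :: cs), s => node (graftLeftmost c s :: cs)

/-- Trees obtained from the single-vertex tree by repeatedly grafting a corolla
onto the leftmost leaf. -/
inductive IsBST : PTree → Prop
  | single : IsBST leaf
  | graft (t : PTree) (m : ℕ) : IsBST t → 2 ≤ m → IsBST (graftLeftmost t (corolla m))

/-- Schröder trees whose leftmost child of the root is a leaf. -/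
def IsPST (t : PTree) : Prop := ∃ cs, t = node (leaf :: cs)

end PTree
section Partitions

open scoped BigOperators

/-- Set partitions of `[n] = {1,…,n}`, modeled as finpartitions of `Fin n`. -/
abbrev NPart (n : ℕ) := Finpartition (Finset.univ : Finset (Fin n))

/-- Noncrossing partitions: there are no `a < b < c < d` with `a, c` in one block and
`b, d` in a different block. -/
def IsNoncrossing {n : ℕ} (π : NPart n) : Prop :=
  ∀ a b c d : Fin n, a < b → b < c → c < d →
    ∀ V ∈ π.parts, ∀ W ∈ π.parts, a ∈ V → c ∈ V → b ∈ W → d ∈ W → V = W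

/-- Interval partitions: every block is an interval of consecutive elements. -/
def IsIntervalPart {n : ℕ} (π : NPart n) : Prop :=
  ∀ V ∈ π.parts, ∀ x ∈ V, ∀ y ∈ V, ∀ z : Fin n, x ≤ z → z ≤ y → z ∈ V

/-- Irreducible noncrossing partitions: `1` and `n` lie in the same block. -/
def IsIrreducibleNC {n : ℕ} (π : NPart n) : Prop :=
  ∃ V ∈ π.parts, (∀ i : Fin n, i.val = 0 → i ∈ V) ∧ (∀ i : Fin n, i.val = n - 1 → i ∈ V)

/-- `W` is nested in `V`: every element of `W` lies in the interval `[min V, max V]`. -/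
def NestedIn {n : ℕ} (W V : Finset (Fin n)) : Prop :=
  ∀ w ∈ W, (∃ a ∈ V, a ≤ w) ∧ (∃ b ∈ V, w ≤ b)

open Classical in
/-- The forest factorial `t(π)!` of the forest of nestings of `π`: the product, over all
blocks `V`, of the number of blocks nested in `V` (the size of the subtree rooted at `V`). -/
noncomputable def forestFactorial {n : ℕ} (π : NPart n) : ℕ :=
  ∏ V ∈ π.parts, (π.parts.filter fun W => NestedIn W V).card

/-- `f_π(a_1,…,a_n)`: the product over the blocks `V = {i_1 < … < i_s}` of `π` of
`f(a_{i_1},…,a_{i_s})`, for a family of multilinear functionals encoded as `f : List A → ℂ`. -/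
noncomputable def blockApply {A : Type*} {n : ℕ} (f : List A → ℂ) (a : Fin n → A)
    (π : NPart n) : ℂ :=
  ∏ V ∈ π.parts, f ((V.sort (· ≤ ·)).map a)

/-- `φ_π(a_1,…,a_n)` for the moment functionals `φ_m(a_1,…,a_m) = φ(a_1 ⋯ a_m)`. -/
noncomputable def momApply {A : Type*} [Ring A] {n : ℕ} (φ : A → ℂ) (a : Fin n → A)
    (π : NPart n) : ℂ :=
  blockApply (fun l => φ l.prod) a π

/-- `ω_k(t(π))` for the nesting poset of the blocks of `π` (for irreducible `π`, this is
the vertex poset of the tree of nestings, rooted at the outermost block): the number of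
surjective strictly order-preserving maps onto `{1,…,k}`. -/
noncomputable def omegaNestK {n : ℕ} (π : NPart n) (k : ℕ) : ℕ :=
  Nat.card {f : {V // V ∈ π.parts} → Fin k // Function.Surjective f ∧
    ∀ V W : {V // V ∈ π.parts}, NestedIn W.1 V.1 → V ≠ W → f V < f W}

/-- The Murua coefficient `ω(t(π))` of the tree (forest) of nestings of `π`. -/
noncomputable def omegaNest {n : ℕ} (π : NPart n) : ℂ :=
  ∑ k ∈ Finset.Icc 1 π.parts.card, ((-1 : ℂ) ^ (k + 1) / (k : ℂ)) * (omegaNestK π k : ℂ)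

/-- The noncrossing partition `π(t)` associated to a Schröder tree `t ∈ ST(n)` equals `π`:
two sectors lie in the same block of `π(t)` (i.e. have the same owning internal vertex)
iff they lie in the same block of `π`. -/
def TreePartEq {n : ℕ} (t : PTree) (π : NPart n) : Prop :=
  ∀ i j : Fin n, PTree.SameOwner t i.val j.val ↔ ∃ V ∈ π.parts, i ∈ V ∧ j ∈ V

/-- The moment–cumulant relation defining the monotone cumulants `h`. -/
def MonotoneMC {A : Type*} [Ring A] (φ : A → ℂ) (h : List A → ℂ) : Prop :=
  ∀ (m : ℕ), 1 ≤ m → ∀ a : Fin m → A,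
    φ (List.ofFn a).prod =
      ∑ᶠ π ∈ {π : NPart m | IsNoncrossing π}, (forestFactorial π : ℂ)⁻¹ * blockApply h a π

/-- The moment–cumulant relation defining the free cumulants `r`. -/
def FreeMC {A : Type*} [Ring A] (φ : A → ℂ) (r : List A → ℂ) : Prop :=
  ∀ (m : ℕ), 1 ≤ m → ∀ a : Fin m → A,
    φ (List.ofFn a).prod = ∑ᶠ π ∈ {π : NPart m | IsNoncrossing π}, blockApply r a π

/-- The moment–cumulant relation defining the Boolean cumulants `b`. -/
def BooleanMC {A : Type*} [Ring A] (φ : A → ℂ) (b : List A → ℂ) : Prop :=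
  ∀ (m : ℕ), 1 ≤ m → ∀ a : Fin m → A,
    φ (List.ofFn a).prod = ∑ᶠ π ∈ {π : NPart m | IsIntervalPart π}, blockApply b a π

end Partitions

/-!
Weight the noncrossing partitions by inverse forest factorials and record the number of blocks by
powers of a variable `X`. The derivative of the resulting polynomial removes an outer block, whose
complement then has to respect the gaps left behind. Hence the polynomials form a semigroup under
translation (the monotone convolution powers): the value at `1` is the moment, the derivative at
`0` is the cumulant, and the value at `t + 1` is a sum, over the possible blocks, of a moment times
products of values at `t` over the gaps.

At natural numbers this recursion is the one satisfied by the sum over Schröder trees of `φ_{π(t)}`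
times the number of strict maps from the skeleton to `{1, …, N}`: such a map either avoids the value
`1`, or sends exactly the root to `1`. So the polynomial equals the sum of `φ_{π(t)}` times the
strict order polynomials of the skeletons, and the derivative of an order polynomial at `0` is the
Murua coefficient.
-/

namespace MonotoneCumulants

open Finset Polynomial

section Nesting

variable {α : Type*} [LinearOrder α]

/-- No element of the set of barriers `B` lies strictly between two elements of `V`. -/
def Unsplit (V B : Finset α) : Prop :=
  ∀ x ∈ V, ∀ y ∈ V, ∀ b ∈ B, x < b → ¬ b < y

/-- `W` lies in the convex hull of `V`. This is `NestedIn` over an arbitrary linear order. -/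
def Nested (W V : Finset α) : Prop :=
  ∀ w ∈ W, (∃ a ∈ V, a ≤ w) ∧ (∃ b ∈ V, w ≤ b)

/-- Some barrier in `B` lies strictly between any element of `Y` and any element of `Z`. -/
def Separates (B Y Z : Finset α) : Prop :=
  ∀ y ∈ Y, ∀ z ∈ Z, ∃ b ∈ B, (y < b ∧ b < z) ∨ (z < b ∧ b < y)

/-- Noncrossing partitions of a finite subset of a linear order. On `univ : Finset (Fin n)` this is
`IsNoncrossing`. -/
def Noncrossing {Y : Finset α} (π : Finpartition Y) : Prop :=
  ∀ a b c d : α, a < b → b < c → c < d →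
    ∀ V ∈ π.parts, ∀ W ∈ π.parts, a ∈ V → c ∈ V → b ∈ W → d ∈ W → V = W

open Classical in
/-- The number of blocks in `P` nested in `V`. -/
noncomputable def nestCount (P : Finset (Finset α)) (V : Finset α) : ℕ :=
  #{W ∈ P | Nested W V}

/-- The factorial of the forest of nestings of the set of blocks `P`. -/
noncomputable def nestFactorial (P : Finset (Finset α)) : ℕ :=
  ∏ V ∈ P, nestCount P V

open Classical in
/-- The blocks in `P` that are nested in no other block: the roots of the forest of nestings. -/
noncomputable def outerBlocks (P : Finset (Finset α)) : Finset (Finset α) :=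
  {V ∈ P | ∀ W ∈ P, Nested V W → W = V}

lemma mem_outerBlocks {P : Finset (Finset α)} {V : Finset α} :
    V ∈ outerBlocks P ↔ V ∈ P ∧ ∀ W ∈ P, Nested V W → W = V := by
  simp [outerBlocks]

lemma unsplit_union {V B B' : Finset α} :
    Unsplit V (B ∪ B') ↔ Unsplit V B ∧ Unsplit V B' := by
  simp only [Unsplit, mem_union]
  grind

lemma unsplit_empty (V : Finset α) : Unsplit V ∅ := by
  simp [Unsplit]

lemma Separates.symm {B Y Z : Finset α} (hB : Separates B Y Z) : Separates B Z Y := by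
  intro z hz y hy
  obtain ⟨b, hb, hyz⟩ := hB y hy z hz
  exact ⟨b, hb, hyz.symm⟩

lemma Separates.mono {B B' Y Y' Z : Finset α} (hB : Separates B Y Z) (hBB' : B ⊆ B')
    (hY : Y' ⊆ Y) : Separates B' Y' Z := by
  intro y hy z hz
  obtain ⟨b, hb, hyz⟩ := hB y (hY hy) z hz
  exact ⟨b, hBB' hb, hyz⟩

lemma Separates.disjoint {B Y Z : Finset α} (hB : Separates B Y Z) : Disjoint Y Z := by
  refine disjoint_left.2 fun x hxY hxZ => ?_
  obtain ⟨b, -, ⟨hxb, hbx⟩ | ⟨hxb, hbx⟩⟩ := hB x hxY x hxZ <;> exact lt_asymm hxb hbx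

lemma Separates.subset_or_subset {B Y Z V : Finset α} (hB : Separates B Y Z) (hV : V ⊆ Y ∪ Z)
    (hVB : Unsplit V B) : V ⊆ Y ∨ V ⊆ Z := by
  by_contra! h
  obtain ⟨⟨z, hzV, hzY⟩, ⟨y, hyV, hyZ⟩⟩ := And.imp not_subset.1 not_subset.1 h
  have hz : z ∈ Z := (mem_union.1 (hV hzV)).resolve_left hzY
  have hy : y ∈ Y := (mem_union.1 (hV hyV)).resolve_right hyZ
  obtain ⟨b, hb, ⟨hyb, hbz⟩ | ⟨hzb, hby⟩⟩ := hB y hy z hz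
  exacts [hVB y hyV z hzV b hb hyb hbz, hVB z hzV y hyV b hb hzb hby]

lemma Separates.unsplit {B Y Z W : Finset α} (hB : Separates B Y Z) (hWZ : W ⊆ Z)
    (hWB : Unsplit W B) : Unsplit W Y := by
  intro w hw w' hw' y hy hwy hyw'
  obtain ⟨b, hb, ⟨hyb, hbw⟩ | ⟨hwb, hby⟩⟩ := hB y hy w (hWZ hw)
  · exact (hyb.trans hbw).asymm hwy
  · exact hWB w hw w' hw' b hb hwb (hby.trans hyw')

lemma Nested.refl (V : Finset α) : Nested V V :=
  fun w hw => ⟨⟨w, hw, le_rfl⟩, ⟨w, hw, le_rfl⟩⟩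

lemma Nested.trans {U V W : Finset α} (hUV : Nested U V) (hVW : Nested V W) : Nested U W := by
  intro u hu
  obtain ⟨⟨a, ha, hau⟩, ⟨b, hb, hub⟩⟩ := hUV u hu
  obtain ⟨⟨c, hc, hca⟩, -⟩ := hVW a ha
  obtain ⟨-, ⟨d, hd, hbd⟩⟩ := hVW b hb
  exact ⟨⟨c, hc, hca.trans hau⟩, ⟨d, hd, hub.trans hbd⟩⟩

lemma nestCount_pos {P : Finset (Finset α)} {V : Finset α} (hV : V ∈ P) : 0 < nestCount P V := by
  classical
  exact card_pos.2 ⟨V, mem_filter.2 ⟨hV, Nested.refl V⟩⟩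

lemma nestCount_lt_nestCount {P : Finset (Finset α)} {U V : Finset α} (hV : V ∈ P)
    (hUV : Nested U V) (hVU : ¬ Nested V U) : nestCount P U < nestCount P V := by
  classical
  refine card_lt_card ((ssubset_iff_of_subset ?_).2
    ⟨V, mem_filter.2 ⟨hV, Nested.refl V⟩, fun h => hVU (mem_filter.1 h).2⟩)
  exact monotone_filter_right P fun W _ hW => hW.trans hUV

section Finpartition

variable {Y U V W : Finset α} {π : Finpartition Y}

lemma not_unsplit_of_nested (hV : V ∈ π.parts) (hU : U ∈ π.parts) (hne : V ≠ U)
    (h : Nested V U) : ¬ Unsplit U V := by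
  obtain ⟨v, hv⟩ := π.nonempty_of_mem_parts hV
  obtain ⟨⟨x, hx, hxv⟩, ⟨y, hy, hvy⟩⟩ := h v hv
  have hdisj : v ∉ U := fun hvU => hne (π.eq_of_mem_parts hV hU hv hvU)
  exact fun hsplit => hsplit x hx y hy v hv (hxv.lt_of_ne fun e => hdisj (e ▸ hx))
    (hvy.lt_of_ne fun e => hdisj (e ▸ hy))

lemma Noncrossing.nested_of_not_unsplit (hπ : Noncrossing π) (hV : V ∈ π.parts)
    (hU : U ∈ π.parts) (hne : V ≠ U) (h : ¬ Unsplit U V) : Nested V U := by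
  simp only [Unsplit, not_forall, not_not] at h
  obtain ⟨x, hx, y, hy, b, hb, hxb, hby⟩ := h
  refine fun v hv => ⟨⟨x, hx, ?_⟩, ⟨y, hy, ?_⟩⟩
  · by_contra! hvx
    exact hne (hπ v x b y hvx hxb hby V hV U hU hv hb hx hy)
  · by_contra! hyv
    exact hne (hπ x b y v hxb hby hyv U hU V hV hx hy hb hv).symm

lemma Noncrossing.eq_of_nested (hπ : Noncrossing π) (hV : V ∈ π.parts) (hU : U ∈ π.parts)
    (hVU : Nested V U) (hUV : Nested U V) : V = U := by
  by_contra hne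
  have hsplit := not_unsplit_of_nested hV hU hne hVU
  simp only [Unsplit, not_forall, not_not] at hsplit
  obtain ⟨x, hx, y, hy, b, hb, hxb, hby⟩ := hsplit
  obtain ⟨⟨a, ha, hax⟩, -⟩ := hUV x hx
  have hax' : a < x := hax.lt_of_ne fun e => hne (π.eq_of_mem_parts hV hU ha (e ▸ hx))
  exact hne (hπ a x b y hax' hxb hby V hV U hU ha hb hx hy)

lemma Noncrossing.unsplit_of_mem_outerBlocks (hπ : Noncrossing π) (hV : V ∈ outerBlocks π.parts)
    (hW : W ∈ π.parts) (hne : W ≠ V) : Unsplit W V := by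
  rw [mem_outerBlocks] at hV
  by_contra h
  exact hne (hV.2 W hW (hπ.nested_of_not_unsplit hV.1 hW hne.symm h))

lemma Noncrossing.exists_mem_outerBlocks_nested (hπ : Noncrossing π) (hW : W ∈ π.parts) :
    ∃ V ∈ outerBlocks π.parts, Nested W V := by
  classical
  obtain ⟨V, hV, hmax⟩ := exists_max_image {V ∈ π.parts | Nested W V} (nestCount π.parts)
    ⟨W, mem_filter.2 ⟨hW, Nested.refl W⟩⟩
  rw [mem_filter] at hV
  refine ⟨V, mem_outerBlocks.2 ⟨hV.1, fun U hU hVU => ?_⟩, hV.2⟩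
  by_contra hne
  refine (hmax U (mem_filter.2 ⟨hU, hV.2.trans hVU⟩)).not_gt
    (nestCount_lt_nestCount hU hVU fun hUV => hne (hπ.eq_of_nested hU hV.1 hUV hVU))

lemma Noncrossing.eq_of_nested_outerBlocks (hπ : Noncrossing π) (hW : W ∈ π.parts)
    (hU : U ∈ outerBlocks π.parts) (hV : V ∈ outerBlocks π.parts) (hWU : Nested W U)
    (hWV : Nested W V) : U = V := by
  by_contra hne
  have hUV := hπ.unsplit_of_mem_outerBlocks hV (mem_outerBlocks.1 hU).1 hne
  have hVU := hπ.unsplit_of_mem_outerBlocks hU (mem_outerBlocks.1 hV).1 (Ne.symm hne)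
  have hdisj : ∀ x ∈ U, ∀ y ∈ V, x ≠ y := fun x hx y hy e =>
    hne (π.eq_of_mem_parts (mem_outerBlocks.1 hU).1 (mem_outerBlocks.1 hV).1 hx (e ▸ hy))
  obtain ⟨w, hw⟩ := π.nonempty_of_mem_parts hW
  obtain ⟨⟨p, hp, hpw⟩, ⟨q, hq, hwq⟩⟩ := hWU w hw
  obtain ⟨⟨r, hr, hrw⟩, ⟨s, hs, hws⟩⟩ := hWV w hw
  rcases (hdisj p hp r hr).lt_or_gt with hpr | hrp
  · exact hUV p hp q hq r hr hpr ((hrw.trans hwq).lt_of_ne (hdisj q hq r hr).symm)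
  · exact hVU r hr s hs p hp hrp ((hpw.trans hws).lt_of_ne (hdisj p hp s hs))

lemma Noncrossing.sum_nestCount_outerBlocks (hπ : Noncrossing π) :
    ∑ V ∈ outerBlocks π.parts, nestCount π.parts V = #π.parts := by
  classical
  simp only [nestCount, card_filter]
  rw [sum_comm, card_eq_sum_ones]
  refine sum_congr rfl fun W hW => ?_
  obtain ⟨V, hV, hWV⟩ := hπ.exists_mem_outerBlocks_nested hW
  rw [sum_eq_single_of_mem V hV, if_pos hWV]
  exact fun U hU hne => if_neg fun hWU => hne (hπ.eq_of_nested_outerBlocks hW hU hV hWU hWV)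

end Finpartition

lemma nestFactorial_eq_mul_erase {P : Finset (Finset α)} {V : Finset α}
    (hV : V ∈ outerBlocks P) :
    nestFactorial P = nestCount P V * nestFactorial (P.erase V) := by
  classical
  rw [mem_outerBlocks] at hV
  rw [nestFactorial, ← mul_prod_erase P _ hV.1, nestFactorial]
  congr 1
  refine prod_congr rfl fun W hW => ?_
  rw [mem_erase] at hW
  rw [nestCount, nestCount, filter_erase, erase_eq_of_notMem]
  exact fun hVW => hW.1 (hV.2 W hW.2 (mem_filter.1 hVW).2)

end Nesting

section CompatiblePartitions

variable {α : Type*} [LinearOrder α]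

open Classical in
/-- The noncrossing partitions of `Y` none of whose blocks is split by the barriers `B`. -/
noncomputable def ncPartitions (Y B : Finset α) : Finset (Finpartition Y) :=
  {π | Noncrossing π ∧ ∀ V ∈ π.parts, Unsplit V B}

open Classical in
/-- The nonempty subsets of `Y` that are not split by the barriers `B`: the possible outer blocks of
a partition in `ncPartitions Y B`. -/
noncomputable def unsplitSubsets (Y B : Finset α) : Finset (Finset α) :=
  {V ∈ Y.powerset | V.Nonempty ∧ Unsplit V B}

variable {Y B V : Finset α}

lemma mem_ncPartitions {π : Finpartition Y} :
    π ∈ ncPartitions Y B ↔ Noncrossing π ∧ ∀ V ∈ π.parts, Unsplit V B := by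
  simp [ncPartitions]

lemma mem_unsplitSubsets : V ∈ unsplitSubsets Y B ↔ V ⊆ Y ∧ V.Nonempty ∧ Unsplit V B := by
  simp [unsplitSubsets]

lemma mem_unsplitSubsets_of_mem_parts {π : Finpartition Y} (hπ : π ∈ ncPartitions Y B)
    (hV : V ∈ π.parts) : V ∈ unsplitSubsets Y B :=
  mem_unsplitSubsets.2 ⟨π.le hV, π.nonempty_of_mem_parts hV, (mem_ncPartitions.1 hπ).2 V hV⟩

lemma parts_avoid_of_mem {π : Finpartition Y} (hV : V ∈ π.parts) :
    (π.avoid V).parts = π.parts.erase V := by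
  ext W
  rw [π.mem_avoid, mem_erase]
  constructor
  · rintro ⟨U, hU, hUV, rfl⟩
    have hne : U ≠ V := fun e => hUV e.le
    have hdisj : Disjoint U V := π.disjoint hU hV hne
    rw [sdiff_eq_self_of_disjoint hdisj]
    exact ⟨hne, hU⟩
  · rintro ⟨hne, hW⟩
    have hdisj : Disjoint W V := π.disjoint hW hV hne
    exact ⟨W, hW, fun h => (π.nonempty_of_mem_parts hW).ne_empty
      (disjoint_self.1 (hdisj.mono_right h)), sdiff_eq_self_of_disjoint hdisj⟩

lemma avoid_mem_ncPartitions {π : Finpartition Y} (hπ : π ∈ ncPartitions Y B)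
    (hV : V ∈ outerBlocks π.parts) : π.avoid V ∈ ncPartitions (Y \ V) (B ∪ V) := by
  rw [mem_ncPartitions] at hπ
  have hparts := parts_avoid_of_mem (mem_outerBlocks.1 hV).1
  refine mem_ncPartitions.2 ⟨fun a b c d hab hbc hcd U hU W hW => ?_, fun W hW => ?_⟩
  · rw [hparts] at hU hW
    exact hπ.1 a b c d hab hbc hcd U (mem_of_mem_erase hU) W (mem_of_mem_erase hW)
  · rw [hparts, mem_erase] at hW
    exact unsplit_union.2
      ⟨hπ.2 W hW.2, hπ.1.unsplit_of_mem_outerBlocks hV hW.2 hW.1⟩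

/-- The partition of `Y` obtained from one of `Y \ V` by adding the block `V`. -/
def insertBlock (hV : V ∈ unsplitSubsets Y B) (σ : Finpartition (Y \ V)) : Finpartition Y :=
  σ.extend (mem_unsplitSubsets.1 hV).2.1.ne_empty sdiff_disjoint
    (sdiff_union_of_subset (mem_unsplitSubsets.1 hV).1)

lemma notMem_parts_of_sdiff (hV : V ∈ unsplitSubsets Y B) (σ : Finpartition (Y \ V)) :
    V ∉ σ.parts := fun h =>
  (mem_unsplitSubsets.1 hV).2.1.ne_empty
    (disjoint_self.1 (sdiff_disjoint.mono_left (σ.le h)))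

lemma noncrossing_insertBlock (hV : V ∈ unsplitSubsets Y B) {σ : Finpartition (Y \ V)}
    (hσ : Noncrossing σ) (hσV : ∀ W ∈ σ.parts, Unsplit W V) : Noncrossing (insertBlock hV σ) := by
  intro a b c d hab hbc hcd U hU W hW ha hc hb hd
  rcases mem_insert.1 hU with rfl | hU <;> rcases mem_insert.1 hW with rfl | hW
  · rfl
  · exact absurd hcd (hσV W hW b hb d hd c hc hbc)
  · exact absurd hbc (hσV U hU a ha c hc b hb hab)
  · exact hσ a b c d hab hbc hcd U hU W hW ha hc hb hd

lemma insertBlock_mem_ncPartitions (hV : V ∈ unsplitSubsets Y B) {σ : Finpartition (Y \ V)}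
    (hσ : σ ∈ ncPartitions (Y \ V) (B ∪ V)) : insertBlock hV σ ∈ ncPartitions Y B := by
  simp only [mem_ncPartitions, unsplit_union] at hσ
  refine mem_ncPartitions.2
    ⟨noncrossing_insertBlock hV hσ.1 fun W hW => (hσ.2 W hW).2, fun W hW => ?_⟩
  rcases mem_insert.1 hW with rfl | hW
  exacts [(mem_unsplitSubsets.1 hV).2.2, (hσ.2 W hW).1]

lemma mem_outerBlocks_insertBlock (hV : V ∈ unsplitSubsets Y B) {σ : Finpartition (Y \ V)}
    (hσ : σ ∈ ncPartitions (Y \ V) (B ∪ V)) : V ∈ outerBlocks (insertBlock hV σ).parts := by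
  have hmem : V ∈ (insertBlock hV σ).parts := mem_insert_self _ _
  refine mem_outerBlocks.2 ⟨hmem, fun W hW hVW => ?_⟩
  by_contra hne
  have hWσ : W ∈ σ.parts := mem_of_mem_insert_of_ne hW hne
  exact not_unsplit_of_nested hmem hW (Ne.symm hne) hVW
    (unsplit_union.1 ((mem_ncPartitions.1 hσ).2 W hWσ)).2

lemma sum_ncPartitions_outerBlock {M : Type*} [AddCommMonoid M] (hV : V ∈ unsplitSubsets Y B)
    (F : Finset (Finset α) → M) :
    ∑ π ∈ ncPartitions Y B with V ∈ outerBlocks π.parts, F (π.parts.erase V) =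
      ∑ σ ∈ ncPartitions (Y \ V) (B ∪ V), F σ.parts := by
  refine sum_bij' (fun π _ => π.avoid V) (fun σ _ => insertBlock hV σ) ?_ ?_ ?_ ?_ ?_
  · intro π hπ
    rw [mem_filter] at hπ
    exact avoid_mem_ncPartitions hπ.1 hπ.2
  · exact fun σ hσ => mem_filter.2
      ⟨insertBlock_mem_ncPartitions hV hσ, mem_outerBlocks_insertBlock hV hσ⟩
  · intro π hπ
    have hVπ := (mem_outerBlocks.1 (mem_filter.1 hπ).2).1
    refine Finpartition.ext ?_
    rw [insertBlock, Finpartition.extend_parts, parts_avoid_of_mem hVπ, insert_erase hVπ]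
  · intro σ _
    refine Finpartition.ext ?_
    rw [parts_avoid_of_mem (mem_insert_self V σ.parts), insertBlock, Finpartition.extend_parts,
      erase_insert (notMem_parts_of_sdiff hV σ)]
  · intro π hπ
    rw [parts_avoid_of_mem (mem_outerBlocks.1 (mem_filter.1 hπ).2).1]

lemma sum_unsplitSubsets_powerset {M : Type*} [AddCommMonoid M] (Y B : Finset α)
    (F : Finset α → Finset α → M) :
    ∑ V ∈ unsplitSubsets Y B, ∑ T ∈ (Y \ V).powerset, F V T =
      ∑ S ∈ Y.powerset, ∑ V ∈ unsplitSubsets S B, F V (S \ V) := by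
  rw [sum_sigma', sum_sigma']
  refine sum_bij' (fun x _ => ⟨x.1 ∪ x.2, x.1⟩) (fun x _ => ⟨x.2, x.1 \ x.2⟩) ?_ ?_ ?_ ?_ ?_
  · rintro ⟨V, T⟩ hx
    simp only [mem_sigma, mem_unsplitSubsets, mem_powerset] at hx ⊢
    exact ⟨union_subset hx.1.1 (hx.2.trans sdiff_subset), subset_union_left, hx.1.2⟩
  · rintro ⟨S, V⟩ hx
    simp only [mem_sigma, mem_unsplitSubsets, mem_powerset] at hx ⊢
    exact ⟨⟨hx.2.1.trans hx.1, hx.2.2⟩, sdiff_subset_sdiff hx.1 subset_rfl⟩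
  · rintro ⟨V, T⟩ hx
    have hdisj : Disjoint T V := (subset_sdiff.1 (mem_powerset.1 (mem_sigma.1 hx).2)).2
    simp only [union_sdiff_left, sdiff_eq_self_of_disjoint hdisj]
  · rintro ⟨S, V⟩ hx
    simp only [union_sdiff_of_subset (mem_unsplitSubsets.1 (mem_sigma.1 hx).2).1]
  · rintro ⟨V, T⟩ hx
    have hdisj : Disjoint T V := (subset_sdiff.1 (mem_powerset.1 (mem_sigma.1 hx).2)).2
    simp only [union_sdiff_left, sdiff_eq_self_of_disjoint hdisj]

end CompatiblePartitions

section PartitionPolynomials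

lemma eq_of_derivative_eq {R : Type*} [CommRing R] [IsAddTorsionFree R] {p q : R[X]}
    (hd : derivative p = derivative q) (h0 : p.eval 0 = q.eval 0) : p = q := by
  have hdiff : derivative (p - q) = 0 := by rw [derivative_sub, hd, sub_self]
  rw [← sub_eq_zero, eq_C_of_derivative_eq_zero hdiff, coeff_zero_eq_eval_zero, eval_sub, h0,
    sub_self, C_0]

variable {α : Type*} [LinearOrder α] {K : Type*} [Field K]

/-- The contribution `h_π X ^ |π| / t(π)!` of a set of blocks `P = π` to `ncPoly`. -/
noncomputable def blockMonomial (h : Finset α → K) (P : Finset (Finset α)) : K[X] :=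
  monomial #P ((nestFactorial P : K)⁻¹ * ∏ V ∈ P, h V)

/-- The generating polynomial `∑ h_π X ^ |π| / t(π)!` of the noncrossing partitions of `Y`
compatible with the barriers `B`. Without barriers its value at `1` is the right-hand side of the
monotone moment-cumulant relation. -/
noncomputable def ncPoly (h : Finset α → K) (Y B : Finset α) : K[X] :=
  ∑ π ∈ ncPartitions Y B, blockMonomial h π.parts

lemma ncPoly_empty (h : Finset α → K) (B : Finset α) : ncPoly h ∅ B = 1 := by
  have hparts (π : Finpartition (∅ : Finset α)) : π.parts = ∅ := π.parts_eq_empty_iff.2 rfl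
  have hmem : (⊥ : Finpartition (∅ : Finset α)) ∈ ncPartitions ∅ B := by
    simp [mem_ncPartitions, Noncrossing]
  rw [ncPoly, sum_eq_single_of_mem _ hmem fun π _ hne =>
    absurd (Finpartition.ext ((hparts π).trans (hparts ⊥).symm)) hne]
  simp [blockMonomial, nestFactorial]

lemma eval_zero_ncPoly (h : Finset α → K) (Y B : Finset α) :
    (ncPoly h Y B).eval 0 = if Y = ∅ then 1 else 0 := by
  split_ifs with hY
  · rw [hY, ncPoly_empty, eval_one]
  · rw [ncPoly, eval_finsetSum]
    refine sum_eq_zero fun π _ => ?_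
    obtain ⟨V, hV⟩ := π.parts_nonempty hY
    rw [blockMonomial, eval_monomial, zero_pow (card_ne_zero_of_mem hV), mul_zero]

lemma ncPoly_union_right (h : Finset α → K) {Y B Z : Finset α}
    (hZ : ∀ V ⊆ Y, Unsplit V B → Unsplit V Z) : ncPoly h Y (B ∪ Z) = ncPoly h Y B := by
  rw [ncPoly, ncPoly]
  congr 1
  ext π
  simp only [mem_ncPartitions, unsplit_union]
  exact and_congr_right fun _ => forall₂_congr fun V hV => and_iff_left_of_imp (hZ V (π.le hV))

section CharZero

variable [CharZero K] (h : Finset α → K)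

lemma C_mul_blockMonomial_erase {P : Finset (Finset α)} {V : Finset α} (hV : V ∈ outerBlocks P) :
    C (h V) * blockMonomial h (P.erase V) =
      monomial (#P - 1) (nestCount P V * ((nestFactorial P : K)⁻¹ * ∏ W ∈ P, h W)) := by
  have hVP := (mem_outerBlocks.1 hV).1
  have hne : (nestCount P V : K) ≠ 0 := Nat.cast_ne_zero.2 (nestCount_pos hVP).ne'
  rw [blockMonomial, C_mul_monomial, card_erase_of_mem hVP, nestFactorial_eq_mul_erase hV,
    ← mul_prod_erase P h hVP, Nat.cast_mul, mul_inv]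
  congr 1
  field_simp

lemma derivative_blockMonomial {Y : Finset α} {π : Finpartition Y} (hπ : Noncrossing π) :
    derivative (blockMonomial h π.parts) =
      ∑ V ∈ outerBlocks π.parts, C (h V) * blockMonomial h (π.parts.erase V) := by
  rw [sum_congr rfl fun V hV => C_mul_blockMonomial_erase h hV, ← map_sum, ← sum_mul,
    ← Nat.cast_sum, hπ.sum_nestCount_outerBlocks, blockMonomial, derivative_monomial, mul_comm]

/-- Each block of a noncrossing partition lies below exactly one outer block, so the factor `|π|`
produced by the derivative turns `1 / t(π)!` into the sum, over the outer blocks, of the inverse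
forest factorials of what remains when that block is removed. -/
theorem derivative_ncPoly (Y B : Finset α) :
    derivative (ncPoly h Y B) =
      ∑ V ∈ unsplitSubsets Y B, C (h V) * ncPoly h (Y \ V) (B ∪ V) := by
  classical
  calc derivative (ncPoly h Y B)
    _ = ∑ π ∈ ncPartitions Y B, ∑ V ∈ outerBlocks π.parts,
          C (h V) * blockMonomial h (π.parts.erase V) := by
      rw [ncPoly, derivative_sum]
      exact sum_congr rfl fun π hπ => derivative_blockMonomial h (mem_ncPartitions.1 hπ).1
    _ = ∑ V ∈ unsplitSubsets Y B, ∑ π ∈ ncPartitions Y B with V ∈ outerBlocks π.parts,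
          C (h V) * blockMonomial h (π.parts.erase V) := by
      refine sum_comm' fun π V => ?_
      rw [mem_filter]
      exact ⟨fun hV => ⟨hV, mem_unsplitSubsets_of_mem_parts hV.1 (mem_outerBlocks.1 hV.2).1⟩,
        fun hV => hV.1⟩
    _ = ∑ V ∈ unsplitSubsets Y B, C (h V) * ncPoly h (Y \ V) (B ∪ V) := by
      refine sum_congr rfl fun V hV => ?_
      rw [sum_ncPartitions_outerBlock hV fun P => C (h V) * blockMonomial h P, ncPoly, mul_sum]

lemma eval_zero_derivative_ncPoly {Y : Finset α} (hY : Y.Nonempty) :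
    (derivative (ncPoly h Y ∅)).eval 0 = h Y := by
  rw [derivative_ncPoly, eval_finsetSum, sum_eq_single_of_mem Y]
  · simp [eval_zero_ncPoly]
  · exact mem_unsplitSubsets.2 ⟨subset_rfl, hY, by simp [Unsplit]⟩
  · intro V hV hne
    have hVY : ¬ Y ⊆ V := fun h => hne ((mem_unsplitSubsets.1 hV).1.antisymm h)
    rw [eval_mul, eval_zero_ncPoly, if_neg (mt sdiff_eq_empty_iff_subset.1 hVY), mul_zero]

/-- The semigroup property of monotone convolution powers. -/
theorem ncPoly_comp_X_add_C (t : K) (Y B : Finset α) :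
    (ncPoly h Y B).comp (X + C t) =
      ∑ T ∈ Y.powerset, ncPoly h T B * C ((ncPoly h (Y \ T) (B ∪ T)).eval t) := by
  induction Y using Finset.strongInduction generalizing B with | _ Y ih
  refine eq_of_derivative_eq ?_ ?_
  · calc derivative ((ncPoly h Y B).comp (X + C t))
      _ = ∑ V ∈ unsplitSubsets Y B, C (h V) * (ncPoly h (Y \ V) (B ∪ V)).comp (X + C t) := by
        simp [derivative_comp, derivative_ncPoly, Polynomial.sum_comp]
      _ = ∑ V ∈ unsplitSubsets Y B, ∑ T ∈ (Y \ V).powerset, C (h V) * (ncPoly h T (B ∪ V) *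
            C ((ncPoly h (Y \ (V ∪ T)) (B ∪ (V ∪ T))).eval t)) := by
        refine sum_congr rfl fun V hV => ?_
        rw [mem_unsplitSubsets] at hV
        simp only [ih _ (sdiff_ssubset hV.1 hV.2.1), mul_sum, sdiff_sdiff_left, sup_eq_union,
          union_assoc]
      _ = ∑ S ∈ Y.powerset, ∑ V ∈ unsplitSubsets S B, C (h V) * (ncPoly h (S \ V) (B ∪ V) *
            C ((ncPoly h (Y \ S) (B ∪ S)).eval t)) := by
        rw [sum_unsplitSubsets_powerset]
        refine sum_congr rfl fun S _ => sum_congr rfl fun V hV => ?_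
        rw [union_sdiff_of_subset (mem_unsplitSubsets.1 hV).1]
      _ = derivative (∑ S ∈ Y.powerset,
            ncPoly h S B * C ((ncPoly h (Y \ S) (B ∪ S)).eval t)) := by
        simp only [derivative_sum, derivative_mul, derivative_C, mul_zero, add_zero,
          derivative_ncPoly, sum_mul, mul_assoc]
  · rw [eval_comp, eval_finsetSum, sum_eq_single_of_mem ∅ (empty_mem_powerset _)]
    · simp [eval_zero_ncPoly]
    · intro T _ hT
      simp [eval_zero_ncPoly, hT]

lemma unsplitSubsets_union {B Y Z : Finset α} (hB : Separates B Y Z) :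
    unsplitSubsets (Y ∪ Z) B = unsplitSubsets Y B ∪ unsplitSubsets Z B := by
  ext V
  simp only [mem_union, mem_unsplitSubsets, ← or_and_right]
  refine and_congr_left fun hV => ⟨fun h => hB.subset_or_subset h hV.2, ?_⟩
  rintro (h | h)
  exacts [h.trans subset_union_left, h.trans subset_union_right]

lemma disjoint_unsplitSubsets {B Y Z : Finset α} (hYZ : Disjoint Y Z) :
    Disjoint (unsplitSubsets Y B) (unsplitSubsets Z B) := by
  refine disjoint_left.2 fun V hVY hVZ => ?_
  rw [mem_unsplitSubsets] at hVY hVZ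
  exact hVY.2.1.ne_empty (disjoint_self.1 (hYZ.mono hVY.1 hVZ.1))

theorem ncPoly_union {B Y Z : Finset α} (hB : Separates B Y Z) :
    ncPoly h (Y ∪ Z) B = ncPoly h Y B * ncPoly h Z B := by
  induction hW : Y ∪ Z using Finset.strongInduction generalizing B Y Z with | _ W ih
  subst hW
  -- Removing a block `V ⊆ Y` does not affect `Z`, on which `V` is an ineffective barrier.
  have hrec {Y' Z' : Finset α} (hB : Separates B Y' Z') (hYZ : Y' ∪ Z' = Y ∪ Z) :
      ∑ V ∈ unsplitSubsets Y' B, C (h V) * ncPoly h ((Y' ∪ Z') \ V) (B ∪ V) =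
        derivative (ncPoly h Y' B) * ncPoly h Z' B := by
    rw [derivative_ncPoly, sum_mul]
    refine sum_congr rfl fun V hV => ?_
    rw [mem_unsplitSubsets] at hV
    have hZV : (Y' ∪ Z') \ V = Y' \ V ∪ Z' := by
      rw [union_sdiff_distrib, sdiff_eq_self_of_disjoint (hB.disjoint.symm.mono_right hV.1)]
    have hssub : (Y' ∪ Z') \ V ⊂ Y ∪ Z :=
      hYZ ▸ sdiff_ssubset (hV.1.trans subset_union_left) hV.2.1
    rw [ih _ hssub (hB.mono subset_union_left sdiff_subset) hZV.symm, mul_assoc]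
    congr 2
    exact ncPoly_union_right h fun W hWZ hWB =>
      (hB.mono subset_rfl hV.1).unsplit hWZ hWB
  refine eq_of_derivative_eq ?_ ?_
  · rw [derivative_ncPoly, unsplitSubsets_union hB, sum_union (disjoint_unsplitSubsets hB.disjoint),
      hrec hB rfl, union_comm Y Z,
      hrec hB.symm (union_comm Z Y), derivative_mul, mul_comm (ncPoly h Y B)]
  · rw [eval_mul, eval_zero_ncPoly, eval_zero_ncPoly, eval_zero_ncPoly]
    simp only [union_eq_empty, mul_ite, mul_one, mul_zero, ite_and]
    split_ifs <;> rfl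

lemma ncPoly_union_insert {i : α} {Y Z B : Finset α} (hY : ∀ y ∈ Y, y < i) (hZ : ∀ z ∈ Z, i < z)
    (hB : ∀ b ∈ B, i < b) :
    ncPoly h (Y ∪ Z) (insert i B) = ncPoly h Y ∅ * ncPoly h Z B := by
  have hsep : Separates (insert i B) Y Z := fun y hy z hz =>
    ⟨i, mem_insert_self i B, Or.inl ⟨hY y hy, hZ z hz⟩⟩
  rw [ncPoly_union h hsep, ← empty_union (insert i B), ncPoly_union_right, empty_union, insert_eq,
    union_comm, ncPoly_union_right]
  · intro V hV _ x hx y _ b hb hxb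
    rw [mem_singleton.1 hb] at hxb
    exact absurd (hZ x (hV hx)) hxb.asymm
  · intro V hV _ x _ y hy b hb _ hby
    rcases mem_insert.1 hb with rfl | hb
    exacts [(hY y (hV hy)).asymm hby, ((hY y (hV hy)).trans (hB b hb)).asymm hby]

end CharZero

section Map

variable {β : Type*} [LinearOrder β] (e : α ↪o β)

lemma unsplit_map {V B : Finset α} :
    Unsplit (V.map e.toEmbedding) (B.map e.toEmbedding) ↔ Unsplit V B := by
  simp [Unsplit]

lemma unsplitSubsets_map (Y B : Finset α) :
    unsplitSubsets (Y.map e.toEmbedding) (B.map e.toEmbedding) =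
      (unsplitSubsets Y B).map (mapEmbedding e.toEmbedding).toEmbedding := by
  ext V
  simp only [mem_unsplitSubsets, mem_map, RelEmbedding.coe_toEmbedding, mapEmbedding_apply]
  constructor
  · rintro ⟨hV, hne, hVB⟩
    obtain ⟨W, hW, rfl⟩ := subset_map_iff.1 hV
    exact ⟨W, ⟨hW, map_nonempty.1 hne, (unsplit_map e).1 hVB⟩, rfl⟩
  · rintro ⟨W, ⟨hW, hne, hWB⟩, rfl⟩
    exact ⟨map_subset_map.2 hW, map_nonempty.2 hne, (unsplit_map e).2 hWB⟩

theorem ncPoly_map [CharZero K] (h : Finset β → K) (Y B : Finset α) :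
    ncPoly h (Y.map e.toEmbedding) (B.map e.toEmbedding) =
      ncPoly (fun V => h (V.map e.toEmbedding)) Y B := by
  induction Y using Finset.strongInduction generalizing B with | _ Y ih
  refine eq_of_derivative_eq ?_ ?_
  · rw [derivative_ncPoly, derivative_ncPoly, unsplitSubsets_map, sum_map]
    refine sum_congr rfl fun V hV => ?_
    rw [mem_unsplitSubsets] at hV
    simp only [RelEmbedding.coe_toEmbedding, mapEmbedding_apply, ← Finset.map_sdiff, ← map_union,
      ih _ (sdiff_ssubset hV.1 hV.2.1)]
  · simp only [eval_zero_ncPoly, map_eq_empty]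

end Map

/-- The value at `T` of the moment functional whose monotone cumulants are given by `h`. -/
noncomputable def moment (h : Finset α → K) (T : Finset α) : K :=
  (ncPoly h T ∅).eval 1

lemma moment_empty (h : Finset α → K) : moment h ∅ = 1 := by
  rw [moment, ncPoly_empty, eval_one]

lemma eval_add_one_ncPoly [CharZero K] (h : Finset α → K) (t : K) (Y : Finset α) :
    (ncPoly h Y ∅).eval (t + 1) =
      ∑ T ∈ Y.powerset, moment h T * (ncPoly h (Y \ T) T).eval t := by
  have hcomp := congrArg (eval 1) (ncPoly_comp_X_add_C h t Y ∅)
  simpa [eval_finsetSum, add_comm, moment] using hcomp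

end PartitionPolynomials

section Words

variable {A : Type*}

/-- The functional `f` on words applied to the subword of `a` at the positions in `V`. -/
noncomputable def wordFn {α K : Type*} [LinearOrder α] (f : List A → K) (a : α → A)
    (V : Finset α) : K :=
  f ((V.sort (· ≤ ·)).map a)

lemma wordFn_map {α β K : Type*} [LinearOrder α] [LinearOrder β] (f : List A → K) (a : β → A)
    (e : α ↪o β) (V : Finset α) : wordFn f a (V.map e.toEmbedding) = wordFn f (a ∘ e) V := by
  have hsort : (V.map e.toEmbedding).sort (· ≤ ·) = (V.sort (· ≤ ·)).map e :=
    (map_sort e.toEmbedding V (· ≤ ·) (· ≤ ·) fun a _ b _ => by simp).symm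
  rw [wordFn, wordFn, hsort, List.map_map]

lemma wordFn_univ {K : Type*} {m : ℕ} (f : List A → K) (a : Fin m → A) :
    wordFn f a univ = f (List.ofFn a) := by
  rw [wordFn, Fin.sort_univ, List.ofFn_eq_map]

lemma wordFn_range {K : Type*} (f : List A → K) (a : ℕ → A) (n : ℕ) :
    wordFn f a (range n) = f (List.ofFn fun i : Fin n => a i) := by
  rw [wordFn, sort_range, List.ofFn_eq_map, ← List.map_coe_finRange_eq_range, List.map_map]
  rfl

lemma moment_wordFn_univ {m : ℕ} (h : List A → ℂ) (a : Fin m → A) :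
    moment (wordFn h a) univ =
      ∑ᶠ π ∈ {π : NPart m | IsNoncrossing π}, (forestFactorial π : ℂ)⁻¹ * blockApply h a π := by
  have hset : {π : NPart m | IsNoncrossing π} = (ncPartitions univ ∅ : Finset (NPart m)) := by
    ext π
    simp only [Set.mem_ofPred_eq, mem_coe, mem_ncPartitions, unsplit_empty,
      implies_true, and_true]
    rfl
  rw [hset, finsum_mem_coe_finset, moment, ncPoly, eval_finsetSum]
  refine sum_congr rfl fun π _ => ?_
  rw [blockMonomial, eval_monomial, one_pow, mul_one]
  rfl

lemma moment_wordFn {α : Type*} [LinearOrder α] {f h : List A → ℂ}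
    (hmc : ∀ m : ℕ, 1 ≤ m → ∀ a : Fin m → A, f (List.ofFn a) =
      ∑ᶠ π ∈ {π : NPart m | IsNoncrossing π}, (forestFactorial π : ℂ)⁻¹ * blockApply h a π)
    (a : α → A) {V : Finset α} (hV : V.Nonempty) : moment (wordFn h a) V = wordFn f a V := by
  let e := V.orderEmbOfFin rfl
  have hVe : univ.map e.toEmbedding = V := map_orderEmbOfFin_univ V rfl
  calc moment (wordFn h a) V
    _ = moment (wordFn h (a ∘ e)) univ := by
      simp only [moment, ← hVe, ← map_empty e.toEmbedding, ncPoly_map, wordFn_map]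
    _ = wordFn f (a ∘ e) univ := by
      rw [moment_wordFn_univ, wordFn_univ, hmc _ hV.card_pos]
    _ = wordFn f a V := by rw [← wordFn_map, hVe]

end Words

section OrderPolynomials

variable {K : Type*} [Field K]

lemma eval_neg_one_descPochhammer (k : ℕ) :
    (descPochhammer K k).eval (-1) = (-1) ^ k * (k.factorial : K) := by
  induction k with
  | zero => simp
  | succ k ih =>
    rw [descPochhammer_succ_eval, ih, Nat.factorial_succ]
    push_cast
    ring

lemma eval_zero_derivative_descPochhammer (k : ℕ) :
    (derivative (descPochhammer K (k + 1))).eval 0 = (-1) ^ k * (k.factorial : K) := by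
  rw [descPochhammer_succ_left, derivative_mul]
  simp [eval_comp, eval_neg_one_descPochhammer]

variable {V : Type*} (r : V → V → Prop)

/-- The number of maps `V → {1, …, N}` sending related pairs to strictly increasing pairs. -/
noncomputable def strictMapCount (N : ℕ) : ℕ :=
  Nat.card (r →r ((· < ·) : Fin N → Fin N → Prop))

/-- The number `ω_k` of surjective maps among those counted by `strictMapCount r k`. -/
noncomputable def strictSurjCount (k : ℕ) : ℕ :=
  Nat.card {f : r →r ((· < ·) : Fin k → Fin k → Prop) // Function.Surjective f}

/-- The strict order polynomial of `r`: its value at `N` is `strictMapCount r N`. -/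
noncomputable def strictOrderPoly (K : Type*) [Field K] : K[X] :=
  ∑ k ∈ range (Nat.card V + 1), C ((strictSurjCount r k : K) / k.factorial) * descPochhammer K k

/-- Strict maps with image `S` are the strict surjections onto `{1, …, |S|}`. -/
noncomputable def strictMapsRangeEquiv {N : ℕ} (S : Finset (Fin N)) :
    {f : r →r ((· < ·) : Fin N → Fin N → Prop) // Set.range f = S} ≃
      {f : r →r ((· < ·) : Fin S.card → Fin S.card → Prop) // Function.Surjective f} where
  toFun f := ⟨⟨fun v => (S.orderIsoOfFin rfl).symm
      ⟨f.1 v, f.2.subset (Set.mem_range_self v)⟩,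
      fun hvw => (OrderIso.lt_iff_lt _).2 (f.1.map_rel hvw)⟩, fun i => by
    obtain ⟨v, hv⟩ := f.2.superset (S.orderIsoOfFin rfl i).2
    exact ⟨v, (OrderIso.symm_apply_eq _).2 (Subtype.ext hv)⟩⟩
  invFun f := ⟨⟨fun v => S.orderIsoOfFin rfl (f.1 v),
      fun hvw => (OrderIso.lt_iff_lt (S.orderIsoOfFin rfl)).2 (f.1.map_rel hvw)⟩, by
    ext i
    constructor
    · rintro ⟨v, rfl⟩
      exact Subtype.coe_prop _
    · intro hi
      obtain ⟨v, hv⟩ := f.2 ((S.orderIsoOfFin rfl).symm ⟨i, hi⟩)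
      exact ⟨v, congrArg Subtype.val ((OrderIso.symm_apply_eq _).1 hv.symm).symm⟩⟩
  left_inv f := by ext v; simp
  right_inv f := by
    ext v
    exact congrArg Fin.val ((S.orderIsoOfFin rfl).symm_apply_apply (f.1 v))

variable [CharZero K]

lemma eval_zero_derivative_strictOrderPoly :
    (derivative (strictOrderPoly r K)).eval 0 =
      ∑ k ∈ Icc 1 (Nat.card V), (-1 : K) ^ (k + 1) / k * strictSurjCount r k := by
  rw [strictOrderPoly, derivative_sum, eval_finsetSum, sum_range_succ', descPochhammer_zero,
    mul_one, derivative_C, eval_zero, add_zero, range_eq_Ico,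
    sum_Ico_add' (fun k => (derivative (C ((strictSurjCount r k : K) / k.factorial) *
      descPochhammer K k)).eval 0), zero_add, Ico_add_one_right_eq_Icc]
  refine sum_congr rfl fun k hk => ?_
  obtain ⟨k, rfl⟩ := Nat.exists_eq_add_of_le' (mem_Icc.1 hk).1
  have : (k.factorial : K) ≠ 0 := Nat.cast_ne_zero.2 k.factorial_ne_zero
  have : (k : K) + 1 ≠ 0 := Nat.cast_add_one_ne_zero k
  rw [derivative_C_mul, eval_C_mul, eval_zero_derivative_descPochhammer, Nat.factorial_succ]
  push_cast
  field_simp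
  ring

variable [Finite V]

lemma strictSurjCount_eq_zero {k : ℕ} (hk : Nat.card V < k) : strictSurjCount r k = 0 := by
  refine Nat.card_eq_zero.2 (Or.inl ⟨fun f => hk.not_ge ?_⟩)
  simpa using Nat.card_le_card_of_surjective _ f.2

lemma strictMapCount_eq_sum (N : ℕ) :
    strictMapCount r N = ∑ k ∈ range (N + 1), N.choose k * strictSurjCount r k := by
  classical
  have : Finite (r →r ((· < ·) : Fin N → Fin N → Prop)) := DFunLike.finite _
  let image (f : r →r ((· < ·) : Fin N → Fin N → Prop)) : Finset (Fin N) :=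
    (Set.toFinite (Set.range f)).toFinset
  calc strictMapCount r N
    _ = ∑ S : Finset (Fin N), Nat.card {f // image f = S} := by
      rw [strictMapCount, ← Nat.card_congr (Equiv.sigmaFiberEquiv image), Nat.card_sigma]
    _ = ∑ S ∈ (univ : Finset (Fin N)).powerset, strictSurjCount r S.card := by
      rw [powerset_univ]
      refine sum_congr rfl fun S _ => Nat.card_congr (.trans (.subtypeEquivRight fun f => ?_)
        (strictMapsRangeEquiv r S))
      rw [← coe_inj, Set.Finite.coe_toFinset]
    _ = ∑ k ∈ range (N + 1), N.choose k * strictSurjCount r k := by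
      simpa using sum_powerset_apply_card (strictSurjCount r) (x := (univ : Finset (Fin N)))

lemma eval_natCast_strictOrderPoly (N : ℕ) :
    (strictOrderPoly r K).eval (N : K) = strictMapCount r N := by
  have hterm (k : ℕ) : (C ((strictSurjCount r k : K) / k.factorial) * descPochhammer K k).eval
      (N : K) = (N.choose k * strictSurjCount r k : ℕ) := by
    have : (k.factorial : K) ≠ 0 := Nat.cast_ne_zero.2 k.factorial_ne_zero
    rw [eval_mul, eval_C, descPochhammer_eval_eq_descFactorial,
      Nat.descFactorial_eq_factorial_mul_choose, Nat.cast_mul, Nat.cast_mul]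
    field_simp
  rw [strictMapCount_eq_sum, strictOrderPoly, eval_finsetSum, Nat.cast_sum]
  refine sum_congr_of_eq_on_inter (fun k _ hk => ?_) (fun k _ hk => ?_) fun k _ _ => hterm k
  · rw [mem_range, not_lt, Nat.succ_le_iff] at hk
    rw [hterm, Nat.choose_eq_zero_of_lt hk, zero_mul, Nat.cast_zero]
  · rw [mem_range, not_lt, Nat.succ_le_iff] at hk
    rw [strictSurjCount_eq_zero r hk, mul_zero, Nat.cast_zero]

end OrderPolynomials

end MonotoneCumulants

namespace PTree

open Finset Polynomial MonotoneCumulants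

section ChildPaths

/-- The paths whose first step is some `j < n` and which continue with a path in `E j`. -/
def childPaths (n : ℕ) (E : ℕ → Set (List ℕ)) : Set (List ℕ) :=
  ⋃ j : Fin n, List.cons j '' E j

variable {n : ℕ} {E : ℕ → Set (List ℕ)}

lemma nil_notMem_childPaths : [] ∉ childPaths n E := by
  simp [childPaths]

lemma cons_mem_childPaths {j : ℕ} {p : List ℕ} :
    j :: p ∈ childPaths n E ↔ j < n ∧ p ∈ E j := by
  simp only [childPaths, Set.mem_iUnion, Set.mem_image, List.cons.injEq]
  constructor
  · rintro ⟨⟨k, hk⟩, q, hq, rfl, rfl⟩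
    exact ⟨hk, hq⟩
  · exact fun ⟨hj, hp⟩ => ⟨⟨j, hj⟩, p, hp, rfl, rfl⟩

lemma pairwise_disjoint_image_cons :
    Pairwise (Function.onFun Disjoint fun j : Fin n => List.cons (j : ℕ) '' E j) := by
  intro i j hij
  refine Set.disjoint_left.2 ?_
  rintro _ ⟨p, -, rfl⟩ ⟨q, -, heq⟩
  exact hij (Fin.ext (List.cons.inj heq).1.symm)

lemma finite_childPaths (hE : ∀ j < n, (E j).Finite) : (childPaths n E).Finite :=
  Set.finite_iUnion fun j => (hE j j.2).image _

lemma ncard_childPaths (hE : ∀ j < n, (E j).Finite) :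
    (childPaths n E).ncard = ∑ j ∈ range n, (E j).ncard := by
  rw [childPaths, Set.ncard_iUnion_of_finite (fun j : Fin n => (hE j j.2).image _)
    pairwise_disjoint_image_cons, finsum_eq_sum_of_fintype, ← Fin.sum_univ_eq_sum_range]
  exact sum_congr rfl fun j _ => Set.ncard_image_of_injective _ List.cons_injective

lemma finprod_mem_childPaths {M : Type*} [CommMonoid M] (hE : ∀ j < n, (E j).Finite)
    (F : List ℕ → M) :
    ∏ᶠ q ∈ childPaths n E, F q = ∏ j ∈ range n, ∏ᶠ p ∈ E j, F (j :: p) := by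
  rw [childPaths, finprod_mem_iUnion pairwise_disjoint_image_cons fun j => (hE j j.2).image _,
    finprod_eq_prod_of_fintype, ← Fin.prod_univ_eq_prod_range]
  exact prod_congr rfl fun j _ => finprod_mem_image List.cons_injective.injOn

end ChildPaths

section Vertices

lemma node_induction {P : PTree → Prop} (node : ∀ cs, (∀ c ∈ cs, P c) → P (node cs)) (t : PTree) :
    P t :=
  match t with
  | .node cs => node cs fun c _ => node_induction node c
termination_by sizeOf t

lemma getD_mem {cs : List PTree} {j : ℕ} (hj : j < cs.length) : cs.getD j leaf ∈ cs := by
  rw [List.getD_eq_getElem _ _ hj]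
  exact List.getElem_mem hj

lemma isSchroder_node {cs : List PTree} (hcs : cs ≠ []) :
    IsSchroder (node cs) ↔ 2 ≤ cs.length ∧ ∀ c ∈ cs, IsSchroder c := by
  refine ⟨fun h => ?_, fun h => .node cs h.1 h.2⟩
  cases h with
  | leaf => exact absurd rfl hcs
  | node _ hlen hchildren => exact ⟨hlen, hchildren⟩

variable {cs : List PTree} {j : ℕ} {p : List ℕ}

lemma subtreeAt_cons (hj : j < cs.length) :
    subtreeAt (j :: p) (node cs) = subtreeAt p (cs.getD j leaf) := by
  simp [subtreeAt, hj]

lemma subtreeAt_cons_of_le (hj : cs.length ≤ j) : subtreeAt (j :: p) (node cs) = none := by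
  simp [subtreeAt, hj]

lemma not_isInternalAt_leaf : ¬ IsInternalAt leaf p := by
  rintro ⟨cs, hcs, hne⟩
  cases p <;> simp_all [subtreeAt]

lemma isInternalAt_nil : IsInternalAt (node cs) [] ↔ cs ≠ [] := by
  simp [IsInternalAt, subtreeAt]

lemma isInternalAt_cons : IsInternalAt (node cs) (j :: p) ↔ IsInternalAt (cs.getD j leaf) p := by
  rcases lt_or_ge j cs.length with hj | hj
  · rw [IsInternalAt, subtreeAt_cons hj, IsInternalAt]
  · rw [List.getD_eq_default _ _ hj, iff_false_right not_isInternalAt_leaf, IsInternalAt,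
      subtreeAt_cons_of_le hj]
    simp

lemma lt_length_of_isInternalAt (hp : IsInternalAt (node cs) (j :: p)) : j < cs.length := by
  by_contra hj
  rw [isInternalAt_cons, List.getD_eq_default _ _ (not_lt.1 hj)] at hp
  exact not_isInternalAt_leaf hp

lemma isLeafAt_nil : IsLeafAt (node cs) [] ↔ cs = [] := by
  simp [IsLeafAt, subtreeAt]

lemma isLeafAt_cons :
    IsLeafAt (node cs) (j :: p) ↔ j < cs.length ∧ IsLeafAt (cs.getD j leaf) p := by
  rcases lt_or_ge j cs.length with hj | hj
  · rw [IsLeafAt, subtreeAt_cons hj, IsLeafAt, and_iff_right hj]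
  · rw [IsLeafAt, subtreeAt_cons_of_le hj]
    simp [hj]

lemma setOf_isLeafAt_leaf : {p | IsLeafAt leaf p} = {[]} := by
  ext (_ | ⟨j, p⟩) <;> simp [isLeafAt_nil, isLeafAt_cons]

lemma setOf_isLeafAt_node (hcs : cs ≠ []) :
    {p | IsLeafAt (node cs) p} =
      childPaths cs.length fun j => {p | IsLeafAt (cs.getD j leaf) p} := by
  ext (_ | ⟨j, p⟩)
  · simp [isLeafAt_nil, hcs, nil_notMem_childPaths]
  · rw [cons_mem_childPaths, Set.mem_ofPred_eq, isLeafAt_cons, Set.mem_ofPred_eq]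

lemma setOf_isInternalAt_leaf : {p | IsInternalAt leaf p} = ∅ :=
  Set.eq_empty_of_forall_notMem fun _ => not_isInternalAt_leaf

lemma setOf_isInternalAt_node (hcs : cs ≠ []) :
    {p | IsInternalAt (node cs) p} =
      insert [] (childPaths cs.length fun j => {p | IsInternalAt (cs.getD j leaf) p}) := by
  ext (_ | ⟨j, p⟩)
  · simp [isInternalAt_nil, hcs]
  · rw [Set.mem_insert_iff, or_iff_right (List.cons_ne_nil j p), cons_mem_childPaths]
    exact ⟨fun hp => ⟨lt_length_of_isInternalAt hp, isInternalAt_cons.1 hp⟩,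
      fun hp => isInternalAt_cons.2 hp.2⟩

lemma finite_isLeafAt (t : PTree) : {p | IsLeafAt t p}.Finite := by
  induction t using node_induction with
  | node cs ih =>
    rcases eq_or_ne cs [] with rfl | hcs
    · rw [setOf_isLeafAt_leaf]
      exact Set.finite_singleton _
    · rw [setOf_isLeafAt_node hcs]
      exact finite_childPaths fun j hj => ih _ (getD_mem hj)

lemma finite_isInternalAt (t : PTree) : {p | IsInternalAt t p}.Finite := by
  induction t using node_induction with
  | node cs ih =>
    rcases eq_or_ne cs [] with rfl | hcs
    · rw [setOf_isInternalAt_leaf]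
      exact Set.finite_empty
    · rw [setOf_isInternalAt_node hcs]
      exact (finite_childPaths fun j hj => ih _ (getD_mem hj)).insert _

end Vertices

section Leaves

/-- The number of leaves of the first `j` trees of a forest. -/
noncomputable def leafOffset (cs : List PTree) (j : ℕ) : ℕ :=
  ∑ i ∈ range j, numLeaves (cs.getD i leaf)

lemma leafOffset_zero (cs : List PTree) : leafOffset cs 0 = 0 := rfl

lemma leafOffset_succ (cs : List PTree) (j : ℕ) :
    leafOffset cs (j + 1) = leafOffset cs j + numLeaves (cs.getD j leaf) :=
  sum_range_succ _ _

lemma leafOffset_cons_succ (c : PTree) (cs : List PTree) (j : ℕ) :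
    leafOffset (c :: cs) (j + 1) = numLeaves c + leafOffset cs j := by
  rw [leafOffset, sum_range_succ']
  simp [leafOffset, add_comm]

lemma leafOffset_mono (cs : List PTree) : Monotone (leafOffset cs) :=
  monotone_nat_of_le_succ fun j => by rw [leafOffset_succ]; exact Nat.le_add_right _ _

lemma leafOffset_add_numLeaves_le (cs : List PTree) {j k : ℕ} (hjk : j < k) :
    leafOffset cs j + numLeaves (cs.getD j leaf) ≤ leafOffset cs k := by
  rw [← leafOffset_succ]
  exact leafOffset_mono cs hjk

lemma numLeaves_eq_ncard (t : PTree) : numLeaves t = {p | IsLeafAt t p}.ncard := rfl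

lemma numLeaves_leaf : numLeaves leaf = 1 := by
  rw [numLeaves_eq_ncard, setOf_isLeafAt_leaf, Set.ncard_singleton]

lemma numLeaves_node {cs : List PTree} (hcs : cs ≠ []) :
    numLeaves (node cs) = leafOffset cs cs.length := by
  rw [numLeaves_eq_ncard, setOf_isLeafAt_node hcs, ncard_childPaths fun j _ => finite_isLeafAt _]
  rfl

lemma one_le_numLeaves (t : PTree) : 1 ≤ numLeaves t := by
  induction t using node_induction with
  | node cs ih =>
    rcases eq_or_ne cs [] with rfl | hcs
    · exact numLeaves_leaf.ge
    · have hlen := List.length_pos_iff.2 hcs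
      rw [numLeaves_node hcs]
      exact (ih _ (getD_mem hlen)).trans
        ((Nat.le_add_left _ _).trans (leafOffset_add_numLeaves_le cs hlen))

lemma one_le_leafOffset_length {cs : List PTree} (hcs : cs ≠ []) :
    1 ≤ leafOffset cs cs.length :=
  numLeaves_node hcs ▸ one_le_numLeaves _

lemma isInternalAt_nil_of_two_le {t : PTree} (ht : 2 ≤ numLeaves t) : IsInternalAt t [] := by
  obtain ⟨cs⟩ := t
  rw [isInternalAt_nil]
  rintro rfl
  rw [numLeaves_leaf] at ht
  omega

/-- The leaves of `t` strictly to the left of the subtree at `p`. -/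
def leftLeaves (t : PTree) (p : List ℕ) : Set (List ℕ) :=
  {q | IsLeafAt t q ∧ List.Lex (· < ·) q p ∧ ¬ p <+: q}

lemma leavesBefore_eq_ncard (t : PTree) (p : List ℕ) :
    leavesBefore t p = (leftLeaves t p).ncard := rfl

lemma leavesBefore_nil (t : PTree) : leavesBefore t [] = 0 := by
  rw [leavesBefore_eq_ncard]
  simp [leftLeaves]

lemma leftLeaves_cons {cs : List PTree} {j : ℕ} (hj : j < cs.length) (p : List ℕ) :
    leftLeaves (node cs) (j :: p) = childPaths (j + 1) fun i =>
      if i < j then {q | IsLeafAt (cs.getD i leaf) q} else leftLeaves (cs.getD j leaf) p := by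
  have hcs : cs ≠ [] := List.ne_nil_of_length_pos (by omega)
  ext (_ | ⟨i, q⟩)
  · simp [leftLeaves, isLeafAt_nil, hcs, nil_notMem_childPaths]
  · rw [cons_mem_childPaths, leftLeaves, Set.mem_ofPred_eq, isLeafAt_cons,
      List.cons_lex_cons_iff, List.cons_prefix_cons]
    rcases lt_trichotomy i j with hij | rfl | hij
    · simp only [hij, hij.trans hj, hij.trans (Nat.lt_succ_self j), hij.ne', if_true, true_and,
        true_or, false_and, not_false_eq_true, and_true, Set.mem_ofPred_eq]
    · simp only [leftLeaves, hj, lt_irrefl, Nat.lt_succ_self, if_false, true_and, false_or,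
        Set.mem_ofPred_eq]
    · simp only [hij.not_gt, hij.ne', Nat.lt_succ_iff, hij.not_ge, false_and, and_false, or_self]

lemma leavesBefore_cons {cs : List PTree} {j : ℕ} (hj : j < cs.length) (p : List ℕ) :
    leavesBefore (node cs) (j :: p) = leafOffset cs j + leavesBefore (cs.getD j leaf) p := by
  rw [leavesBefore_eq_ncard, leftLeaves_cons hj, ncard_childPaths, sum_range_succ,
    if_neg (lt_irrefl _), leavesBefore_eq_ncard, leafOffset]
  · refine congrArg (· + _) (sum_congr rfl fun i hi => ?_)
    rw [if_pos (mem_range.1 hi), numLeaves_eq_ncard]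
  · intro i _
    split_ifs
    · exact finite_isLeafAt _
    · exact (finite_isLeafAt _).subset fun q hq => hq.1

end Leaves

section Sectors

lemma subtree!_cons {cs : List PTree} {j : ℕ} (hj : j < cs.length) (p : List ℕ) :
    subtree! (node cs) (j :: p) = subtree! (cs.getD j leaf) p := by
  rw [subtree!, subtreeAt_cons hj, subtree!]

lemma sectorIn_nil {t : PTree} {i : ℕ} : SectorIn t [] i ↔ i + 2 ≤ numLeaves t := by
  simp [SectorIn, leavesBefore_nil, subtree!, subtreeAt]

lemma sectorIn_cons {cs : List PTree} {j : ℕ} (hj : j < cs.length) {p : List ℕ} {i : ℕ} :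
    SectorIn (node cs) (j :: p) i ↔
      leafOffset cs j ≤ i ∧ SectorIn (cs.getD j leaf) p (i - leafOffset cs j) := by
  rw [SectorIn, SectorIn, leavesBefore_cons hj, subtree!_cons hj]
  omega

lemma SectorIn.add_two_le {t : PTree} {p : List ℕ} {i : ℕ} (hp : IsInternalAt t p)
    (hi : SectorIn t p i) : i + 2 ≤ numLeaves t := by
  induction p generalizing t i with
  | nil => exact sectorIn_nil.1 hi
  | cons j p ih =>
    obtain ⟨cs⟩ := t
    have hj := lt_length_of_isInternalAt hp
    obtain ⟨hoffset, hi⟩ := (sectorIn_cons hj).1 hi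
    have hchild := ih (isInternalAt_cons.1 hp) hi
    have hle := leafOffset_add_numLeaves_le cs hj
    rw [numLeaves_node (List.ne_nil_of_length_pos (by omega))]
    omega

lemma SectorIn.prefix_or_prefix {t : PTree} {v w : List ℕ} {i : ℕ} (hv : IsInternalAt t v)
    (hw : IsInternalAt t w) (hvi : SectorIn t v i) (hwi : SectorIn t w i) :
    v <+: w ∨ w <+: v := by
  induction v generalizing t w i with
  | nil => exact Or.inl List.nil_prefix
  | cons j v ih =>
    rcases w with _ | ⟨k, w⟩
    · exact Or.inr List.nil_prefix
    obtain ⟨cs⟩ := t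
    rw [sectorIn_cons (lt_length_of_isInternalAt hv)] at hvi
    rw [sectorIn_cons (lt_length_of_isInternalAt hw)] at hwi
    have hv_le := hvi.2.add_two_le (isInternalAt_cons.1 hv)
    have hw_le := hwi.2.add_two_le (isInternalAt_cons.1 hw)
    rcases lt_trichotomy j k with hjk | rfl | hkj
    · have := leafOffset_add_numLeaves_le cs hjk
      omega
    · simpa using ih (isInternalAt_cons.1 hv) (isInternalAt_cons.1 hw) hvi.2 hwi.2
    · have := leafOffset_add_numLeaves_le cs hkj
      omega

lemma OwnsSector.add_two_le {t : PTree} {v : List ℕ} {i : ℕ} (hi : OwnsSector t v i) :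
    i + 2 ≤ numLeaves t :=
  hi.2.1.add_two_le hi.1

lemma OwnsSector.unique {t : PTree} {v w : List ℕ} {i : ℕ} (hv : OwnsSector t v i)
    (hw : OwnsSector t w i) : v = w := by
  by_contra hne
  rcases hv.2.1.prefix_or_prefix hv.1 hw.1 hw.2.1 with hvw | hwv
  · exact hv.2.2 w hw.1 hvw (Ne.symm hne) hw.2.1
  · exact hw.2.2 v hv.1 hwv hne hv.2.1

lemma ownsSector_cons {cs : List PTree} {j : ℕ} {v : List ℕ} {i : ℕ} :
    OwnsSector (node cs) (j :: v) i ↔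
      leafOffset cs j ≤ i ∧ OwnsSector (cs.getD j leaf) v (i - leafOffset cs j) := by
  by_cases hv : IsInternalAt (node cs) (j :: v)
  swap
  · rw [OwnsSector, OwnsSector, ← isInternalAt_cons]
    simp [hv]
  have hj := lt_length_of_isInternalAt hv
  rw [OwnsSector, OwnsSector, sectorIn_cons hj, isInternalAt_cons]
  constructor
  · rintro ⟨hv, ⟨hoffset, hi⟩, hdeeper⟩
    refine ⟨hoffset, hv, hi, fun w hw hvw hne hs => ?_⟩
    exact hdeeper (j :: w) (isInternalAt_cons.2 hw) (by simpa using hvw) (by simpa using hne)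
      ((sectorIn_cons hj).2 ⟨hoffset, hs⟩)
  · rintro ⟨hoffset, hv, hi, hdeeper⟩
    refine ⟨hv, ⟨hoffset, hi⟩, fun w hw hvw hne hs => ?_⟩
    obtain ⟨w, rfl⟩ : ∃ u, w = j :: u := by
      obtain ⟨u, rfl⟩ := hvw
      exact ⟨v ++ u, rfl⟩
    exact hdeeper w (isInternalAt_cons.1 hw) (by simpa using hvw) (by simpa using hne)
      ((sectorIn_cons hj).1 hs).2

lemma ownsSector_nil {cs : List PTree} (hcs : cs ≠ []) {i : ℕ} :
    OwnsSector (node cs) [] i ↔ i + 2 ≤ leafOffset cs cs.length ∧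
      ∀ j < cs.length, i < leafOffset cs j ∨ leafOffset cs (j + 1) < i + 2 := by
  rw [OwnsSector, sectorIn_nil, numLeaves_node hcs, isInternalAt_nil, and_iff_right hcs]
  refine and_congr_right fun _ => ⟨fun hdeeper j hj => ?_, fun hchild w hw _ hne hs => ?_⟩
  · by_contra! hin
    rw [leafOffset_succ] at hin
    exact hdeeper [j] (isInternalAt_cons.2 (isInternalAt_nil_of_two_le (by omega)))
      List.nil_prefix (by simp) ((sectorIn_cons hj).2 ⟨hin.1, sectorIn_nil.2 (by omega)⟩)
  · rcases w with _ | ⟨j, w⟩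
    · exact hne rfl
    have hj := lt_length_of_isInternalAt hw
    rw [sectorIn_cons hj] at hs
    have hle := hs.2.add_two_le (isInternalAt_cons.1 hw)
    have hout := hchild j hj
    rw [leafOffset_succ] at hout
    omega

lemma exists_ownsSector {t : PTree} {i : ℕ} (hi : i + 2 ≤ numLeaves t) :
    ∃ v, OwnsSector t v i := by
  induction t using node_induction generalizing i with
  | node cs ih =>
    have hcs : cs ≠ [] := isInternalAt_nil.1 (isInternalAt_nil_of_two_le (by omega))
    by_cases hroot : OwnsSector (node cs) [] i
    · exact ⟨[], hroot⟩
    rw [ownsSector_nil hcs, ← numLeaves_node hcs, and_iff_right hi] at hroot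
    push Not at hroot
    obtain ⟨j, hj, hoffset, hsucc⟩ := hroot
    rw [leafOffset_succ] at hsucc
    obtain ⟨v, hv⟩ := ih _ (getD_mem hj) (i := i - leafOffset cs j) (by omega)
    exact ⟨j :: v, ownsSector_cons.2 ⟨hoffset, hv⟩⟩

lemma exists_ownsSector_of_isInternalAt {t : PTree} (ht : IsSchroder t) {v : List ℕ}
    (hv : IsInternalAt t v) : ∃ i, OwnsSector t v i := by
  induction v generalizing t with
  | nil =>
    obtain ⟨cs⟩ := t
    have hcs := isInternalAt_nil.1 hv
    have hlen := ((isSchroder_node hcs).1 ht).1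
    have hone : leafOffset cs 1 = numLeaves (cs.getD 0 leaf) := by
      rw [leafOffset_succ, leafOffset_zero, zero_add]
    have hlast := leafOffset_add_numLeaves_le cs hlen
    have hpos₀ := one_le_numLeaves (cs.getD 0 leaf)
    have hpos₁ := one_le_numLeaves (cs.getD 1 leaf)
    refine ⟨leafOffset cs 1 - 1, (ownsSector_nil hcs).2 ⟨by omega, fun j _ => ?_⟩⟩
    rcases Nat.eq_zero_or_pos j with rfl | hpos
    · right
      rw [zero_add]
      omega
    · left
      have := leafOffset_mono cs hpos
      rw [Nat.succ_eq_add_one, zero_add] at this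
      omega
  | cons j v ih =>
    obtain ⟨cs⟩ := t
    have hj := lt_length_of_isInternalAt hv
    have hcs : cs ≠ [] := List.ne_nil_of_length_pos (by omega)
    obtain ⟨i, hi⟩ := ih (((isSchroder_node hcs).1 ht).2 _ (getD_mem hj)) (isInternalAt_cons.1 hv)
    refine ⟨leafOffset cs j + i, ownsSector_cons.2 ⟨by omega, ?_⟩⟩
    rwa [Nat.add_sub_cancel_left]

end Sectors

section Blocks

open Classical in
/-- The block of `π(t)` owned by the vertex `v`, when the sectors of `t` are numbered from `g` on.
The left end `g` lets subtrees keep the sector numbers of the ambient tree. -/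
noncomputable def blockAt (g : ℕ) (t : PTree) (v : List ℕ) : Finset ℕ :=
  (Ico g (g + numLeaves t)).filter fun i => OwnsSector t v (i - g)

lemma mem_blockAt {g : ℕ} {t : PTree} {v : List ℕ} {i : ℕ} :
    i ∈ blockAt g t v ↔ g ≤ i ∧ OwnsSector t v (i - g) := by
  classical
  rw [blockAt, mem_filter, mem_Ico]
  refine ⟨fun hi => ⟨hi.1.1, hi.2⟩, fun hi => ⟨⟨hi.1, ?_⟩, hi.2⟩⟩
  have := hi.2.add_two_le
  omega

lemma blockAt_nonempty {t : PTree} (ht : IsSchroder t) (g : ℕ) {v : List ℕ}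
    (hv : IsInternalAt t v) : (blockAt g t v).Nonempty := by
  obtain ⟨i, hi⟩ := exists_ownsSector_of_isInternalAt ht hv
  exact ⟨g + i, mem_blockAt.2 ⟨Nat.le_add_right g i, by rwa [Nat.add_sub_cancel_left]⟩⟩

lemma injOn_blockAt {t : PTree} (ht : IsSchroder t) (g : ℕ) :
    Set.InjOn (blockAt g t) {v | IsInternalAt t v} := by
  intro v hv w _ heq
  obtain ⟨i, hi⟩ := blockAt_nonempty ht g hv
  exact (mem_blockAt.1 hi).2.unique (mem_blockAt.1 (heq ▸ hi)).2

lemma blockAt_cons (g : ℕ) (cs : List PTree) (j : ℕ) (v : List ℕ) :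
    blockAt g (node cs) (j :: v) = blockAt (g + leafOffset cs j) (cs.getD j leaf) v := by
  ext i
  have hle : g + leafOffset cs j ≤ i ↔ g ≤ i ∧ leafOffset cs j ≤ i - g := by omega
  rw [mem_blockAt, mem_blockAt, ownsSector_cons, Nat.sub_sub, hle, and_assoc]

lemma blockAt_singleton_nil (g : ℕ) (c : PTree) : blockAt g (node [c]) [] = ∅ := by
  refine eq_empty_of_forall_notMem fun i => ?_
  rw [mem_blockAt, ownsSector_nil (List.cons_ne_nil _ _), List.length_singleton]
  rintro ⟨-, hi, hchild⟩
  have := hchild 0 zero_lt_one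
  rw [leafOffset_zero, zero_add] at this
  omega

lemma blockAt_cons_nil (g : ℕ) (c : PTree) {cs : List PTree} (hcs : cs ≠ []) :
    blockAt g (node (c :: cs)) [] =
      insert (g + numLeaves c - 1) (blockAt (g + numLeaves c) (node cs) []) := by
  ext i
  have hc := one_le_numLeaves c
  have hcs_leaves := one_le_leafOffset_length hcs
  rw [mem_insert, mem_blockAt, mem_blockAt, ownsSector_nil (List.cons_ne_nil _ _),
    ownsSector_nil hcs, List.length_cons, Nat.forall_lt_succ_left, leafOffset_cons_succ,
    leafOffset_cons_succ, leafOffset_zero, leafOffset_zero]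
  simp only [leafOffset_cons_succ]
  constructor
  · rintro ⟨hg, hi, hfirst, hrest⟩
    rcases eq_or_ne i (g + numLeaves c - 1) with rfl | hne
    · exact Or.inl rfl
    · refine Or.inr ⟨by omega, by omega, fun j hj => ?_⟩
      have := hrest j hj
      omega
  · rintro (rfl | ⟨hg, hi, hrest⟩)
    · exact ⟨by omega, by omega, by omega, fun _ _ => by omega⟩
    · refine ⟨by omega, by omega, by omega, fun j hj => ?_⟩
      have := hrest j hj
      omega

variable {M : Type*} [CommMonoid M] (f : Finset ℕ → M) (g : ℕ)

/-- The product of `f` over the blocks of `π(t)`, when the sectors of `t` are numbered from `g`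
on. -/
noncomputable def blockProd (t : PTree) : M :=
  ∏ᶠ v ∈ {v | IsInternalAt t v}, f (blockAt g t v)

/-- The product of `blockProd` over the trees of a forest, the leaves of which are numbered
consecutively from `g` on. -/
noncomputable def forestBlockProd (cs : List PTree) : M :=
  ∏ j ∈ range cs.length, blockProd f (g + leafOffset cs j) (cs.getD j leaf)

lemma blockProd_leaf : blockProd f g leaf = 1 := by
  rw [blockProd, setOf_isInternalAt_leaf, finprod_mem_empty]

lemma blockProd_node {cs : List PTree} (hcs : cs ≠ []) :
    blockProd f g (node cs) = f (blockAt g (node cs) []) * forestBlockProd f g cs := by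
  have hfin : ∀ j < cs.length, {p | IsInternalAt (cs.getD j leaf) p}.Finite :=
    fun j _ => finite_isInternalAt _
  rw [blockProd, setOf_isInternalAt_node hcs,
    finprod_mem_insert _ nil_notMem_childPaths (finite_childPaths hfin),
    finprod_mem_childPaths hfin]
  simp only [blockAt_cons, forestBlockProd, blockProd]

lemma blockProd_congr {t : PTree} (ht : IsSchroder t) {f f' : Finset ℕ → M}
    (hff : ∀ S, S.Nonempty → f S = f' S) : blockProd f g t = blockProd f' g t := by
  exact finprod_mem_congr rfl fun v hv => hff _ (blockAt_nonempty ht g hv)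

lemma forestBlockProd_nil : forestBlockProd f g [] = 1 := rfl

lemma forestBlockProd_cons (c : PTree) (cs : List PTree) :
    forestBlockProd f g (c :: cs) = blockProd f g c * forestBlockProd f (g + numLeaves c) cs := by
  rw [forestBlockProd, List.length_cons, prod_range_succ', mul_comm, forestBlockProd]
  simp only [leafOffset_cons_succ, leafOffset_zero, add_zero, List.getD_cons_zero,
    List.getD_cons_succ, add_assoc]

end Blocks

section StrictMaps

/-- The strict order of the skeleton of `t`, on the internal vertices of `t`. -/
def SkeletonLT (t : PTree) (v w : {p // IsInternalAt t p}) : Prop :=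
  v.1 <+: w.1 ∧ v ≠ w

instance finite_internalVertices (t : PTree) : Finite {p // IsInternalAt t p} :=
  finite_isInternalAt t

lemma strictSurjCount_skeletonLT (t : PTree) (k : ℕ) :
    strictSurjCount (SkeletonLT t) k = omegaSkK t k :=
  Nat.card_congr
    { toFun := fun f => ⟨f.1, f.2, fun _ _ hpre hne => f.1.map_rel ⟨hpre, hne⟩⟩
      invFun := fun f => ⟨⟨f.1, fun hvw => f.2.2 _ _ hvw.1 hvw.2⟩, f.2.1⟩
      left_inv := fun _ => rfl
      right_inv := fun _ => rfl }

lemma eval_zero_derivative_strictOrderPoly_skeletonLT (t : PTree) :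
    (derivative (strictOrderPoly (SkeletonLT t) ℂ)).eval 0 = omegaSk t := by
  rw [eval_zero_derivative_strictOrderPoly]
  simp only [strictSurjCount_skeletonLT]
  rfl

lemma strictMapCount_leaf (N : ℕ) : strictMapCount (SkeletonLT leaf) N = 1 := by
  have : IsEmpty {p // IsInternalAt leaf p} := ⟨fun p => not_isInternalAt_leaf p.2⟩
  exact Nat.card_eq_one_iff_unique.2 ⟨⟨fun f f' => RelHom.ext fun p => isEmptyElim p⟩,
    ⟨⟨fun p => isEmptyElim p, fun {p} => isEmptyElim p⟩⟩⟩

variable {cs : List PTree}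

/-- The root of a tree with at least one child, as an internal vertex. -/
def root (hcs : cs ≠ []) : {p // IsInternalAt (node cs) p} := ⟨[], isInternalAt_nil.2 hcs⟩

lemma skeletonLT_root (hcs : cs ≠ []) {v : {p // IsInternalAt (node cs) p}} (hv : v ≠ root hcs) :
    SkeletonLT (node cs) (root hcs) v :=
  ⟨List.nil_prefix, hv.symm⟩

lemma skeletonLT_cons {j : ℕ} {v w : {p // IsInternalAt (cs.getD j leaf) p}} :
    SkeletonLT (node cs) ⟨j :: v.1, isInternalAt_cons.2 v.2⟩ ⟨j :: w.1, isInternalAt_cons.2 w.2⟩ ↔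
      SkeletonLT (cs.getD j leaf) v w := by
  simp [SkeletonLT, Subtype.ext_iff]

lemma strictMapCount_node_zero (hcs : cs ≠ []) : strictMapCount (SkeletonLT (node cs)) 0 = 0 :=
  Nat.card_eq_zero.2 (Or.inl ⟨fun f => (f (root hcs)).elim0⟩)

/-- A strict map to `{0, …, N}` not attaining `0` at the root is a strict map to `{1, …, N}`. -/
def strictMapsRootNeZeroEquiv (hcs : cs ≠ []) (N : ℕ) :
    {f : SkeletonLT (node cs) →r ((· < ·) : Fin (N + 1) → Fin (N + 1) → Prop) //
      f (root hcs) ≠ 0} ≃ (SkeletonLT (node cs) →r ((· < ·) : Fin N → Fin N → Prop)) where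
  toFun f := ⟨fun v => (f.1 v).pred (by
      rcases eq_or_ne v (root hcs) with rfl | hv
      · exact f.2
      · exact ((Fin.zero_le _).trans_lt (f.1.map_rel (skeletonLT_root hcs hv))).ne'),
    fun hvw => Fin.pred_lt_pred_iff.2 (f.1.map_rel hvw)⟩
  invFun f := ⟨⟨fun v => (f v).succ, fun hvw => Fin.succ_lt_succ_iff.2 (f.map_rel hvw)⟩,
    Fin.succ_ne_zero _⟩
  left_inv f := by ext v; simp
  right_inv f := by ext v; simp

/-- A strict map to `{0, …, N}` attaining `0` at the root is a family of strict maps to `{1, …, N}`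
on the children of the root. -/
def strictMapsRootEqZeroEquiv (hcs : cs ≠ []) (N : ℕ) :
    {f : SkeletonLT (node cs) →r ((· < ·) : Fin (N + 1) → Fin (N + 1) → Prop) //
      f (root hcs) = 0} ≃
      ∀ j : Fin cs.length, SkeletonLT (cs.getD j leaf) →r ((· < ·) : Fin N → Fin N → Prop) where
  toFun f j := ⟨fun v => (f.1 ⟨j :: v.1, isInternalAt_cons.2 v.2⟩).pred
      ((Fin.zero_le _).trans_lt (f.1.map_rel (skeletonLT_root hcs (by simp [root])))).ne',
    fun hvw => Fin.pred_lt_pred_iff.2 (f.1.map_rel (skeletonLT_cons.2 hvw))⟩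
  invFun F := ⟨⟨fun v => match v with
      | ⟨[], _⟩ => 0
      | ⟨j :: p, hp⟩ => (F ⟨j, lt_length_of_isInternalAt hp⟩ ⟨p, isInternalAt_cons.1 hp⟩).succ, by
    rintro ⟨_ | ⟨j, v⟩, hv⟩ ⟨_ | ⟨k, w⟩, hw⟩ hvw
    · exact absurd rfl hvw.2
    · exact Fin.succ_pos _
    · exact absurd hvw.1 (by simp)
    · obtain ⟨rfl, -⟩ := List.cons_prefix_cons.1 hvw.1
      exact Fin.succ_lt_succ_iff.2 ((F ⟨j, _⟩).map_rel (skeletonLT_cons.1 hvw))⟩, rfl⟩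
  left_inv f := by
    ext ⟨_ | ⟨j, p⟩, hp⟩
    · exact congrArg Fin.val f.2.symm
    · simp
  right_inv F := by ext j v; simp

/-- The product of the numbers of strict maps over the trees of a forest. -/
noncomputable def forestStrictMapCount (cs : List PTree) (N : ℕ) : ℕ :=
  ∏ j ∈ range cs.length, strictMapCount (SkeletonLT (cs.getD j leaf)) N

lemma forestStrictMapCount_nil (N : ℕ) : forestStrictMapCount [] N = 1 := rfl

lemma forestStrictMapCount_cons (c : PTree) (cs : List PTree) (N : ℕ) :
    forestStrictMapCount (c :: cs) N =
      strictMapCount (SkeletonLT c) N * forestStrictMapCount cs N := by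
  rw [forestStrictMapCount, List.length_cons, prod_range_succ', mul_comm, forestStrictMapCount]
  rfl

lemma strictMapCount_node_succ (hcs : cs ≠ []) (N : ℕ) :
    strictMapCount (SkeletonLT (node cs)) (N + 1) =
      strictMapCount (SkeletonLT (node cs)) N + forestStrictMapCount cs N := by
  classical
  have (k : ℕ) : Finite (SkeletonLT (node cs) →r ((· < ·) : Fin k → Fin k → Prop)) :=
    DFunLike.finite _
  have hchildren : forestStrictMapCount cs N =
      Nat.card (∀ j : Fin cs.length,
        SkeletonLT (cs.getD j leaf) →r ((· < ·) : Fin N → Fin N → Prop)) := by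
    rw [Nat.card_pi, forestStrictMapCount, ← Fin.prod_univ_eq_prod_range fun j =>
      strictMapCount (SkeletonLT (cs.getD j leaf)) N]
    rfl
  rw [hchildren, ← Nat.card_congr (strictMapsRootEqZeroEquiv hcs N), strictMapCount, strictMapCount,
    ← Nat.card_congr (strictMapsRootNeZeroEquiv hcs N), ← Nat.card_sum]
  exact Nat.card_congr ((Equiv.sumComm _ _).trans (Equiv.sumCompl _)).symm

end StrictMaps

section SchroderForests

/-- The forests of Schröder trees with `m + 1` leaves in total; being nonempty, they are the
possible lists of children or of rightmost children of a vertex. -/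
def SchroderForest (m : ℕ) : Set (List PTree) :=
  {cs | (∀ c ∈ cs, IsSchroder c) ∧ leafOffset cs cs.length = m + 1}

variable {m : ℕ} {c : PTree} {cs : List PTree}

lemma ne_nil_of_mem_schroderForest (h : cs ∈ SchroderForest m) : cs ≠ [] := by
  rintro rfl
  exact Nat.succ_ne_zero m h.2.symm

lemma singleton_mem_schroderForest : [c] ∈ SchroderForest m ↔ c ∈ ST m := by
  simp [SchroderForest, ST, leafOffset]

lemma cons_mem_schroderForest (hcs : cs ≠ []) :
    c :: cs ∈ SchroderForest m ↔ ∃ k < m, c ∈ ST k ∧ cs ∈ SchroderForest (m - 1 - k) := by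
  simp only [SchroderForest, ST, Set.mem_ofPred_eq, List.mem_cons, forall_eq_or_imp,
    List.length_cons, leafOffset_cons_succ]
  have hc_leaves := one_le_numLeaves c
  have hcs_leaves := one_le_leafOffset_length hcs
  constructor
  · rintro ⟨⟨hc, hforest⟩, hleaves⟩
    exact ⟨numLeaves c - 1, by omega, ⟨hc, by omega⟩, hforest, by omega⟩
  · rintro ⟨k, hk, ⟨hc, hleaves⟩, hforest, hleaves'⟩
    exact ⟨⟨hc, hforest⟩, by omega⟩

lemma leaf_mem_ST : leaf ∈ ST m ↔ m = 0 := by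
  rw [ST, Set.mem_ofPred_eq, numLeaves_leaf, and_iff_right IsSchroder.leaf]
  omega

lemma node_mem_ST (hcs : cs ≠ []) :
    node cs ∈ ST m ↔ cs ∈ SchroderForest m ∧ 2 ≤ cs.length := by
  rw [ST, Set.mem_ofPred_eq, isSchroder_node hcs, numLeaves_node hcs, SchroderForest,
    Set.mem_ofPred_eq]
  tauto

lemma length_two_le_iff : 2 ≤ (c :: cs).length ↔ cs ≠ [] := by
  rw [List.length_cons, Nat.succ_le_succ_iff, Nat.one_le_iff_ne_zero, Ne, List.length_eq_zero_iff]

lemma finite_ST_and_schroderForest (m : ℕ) : (ST m).Finite ∧ (SchroderForest m).Finite := by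
  induction m using Nat.strong_induction_on with
  | _ m ih =>
    have hlong : {cs ∈ SchroderForest m | 2 ≤ cs.length}.Finite := by
      refine ((Set.finite_Iio m).biUnion fun k hk =>
        (ih k hk).1.image2 List.cons (ih (m - 1 - k) ?_).2).subset ?_
      · rw [Set.mem_Iio] at hk
        omega
      · rintro (_ | ⟨c, cs⟩) ⟨hcs, hlen⟩
        · exact absurd hlen (by simp)
        · obtain ⟨k, hk, hc, hcs⟩ := (cons_mem_schroderForest (length_two_le_iff.1 hlen)).1 hcs
          exact Set.mem_biUnion hk ⟨c, hc, cs, hcs, rfl⟩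
    have htrees : (ST m).Finite := by
      refine ((hlong.image node).insert leaf).subset ?_
      rintro ⟨cs⟩ ht
      rcases eq_or_ne cs [] with rfl | hcs
      · exact Or.inl rfl
      · exact Or.inr ⟨cs, (node_mem_ST hcs).1 ht, rfl⟩
    refine ⟨htrees, ((htrees.image fun c => [c]).union hlong).subset ?_⟩
    rintro (_ | ⟨c, _ | ⟨c', cs⟩⟩) hcs
    · exact absurd rfl (ne_nil_of_mem_schroderForest hcs)
    · exact Or.inl ⟨c, singleton_mem_schroderForest.1 hcs, rfl⟩
    · exact Or.inr ⟨hcs, by simp⟩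

/-- The finite set `ST m` of Schröder trees with `m + 1` leaves. -/
noncomputable def schroderTrees (m : ℕ) : Finset PTree :=
  (finite_ST_and_schroderForest m).1.toFinset

/-- The finite set `SchroderForest m` of forests of Schröder trees. -/
noncomputable def schroderForests (m : ℕ) : Finset (List PTree) :=
  (finite_ST_and_schroderForest m).2.toFinset

/-- The forests of at least two Schröder trees with `m + 1` leaves in total: the lists of children
of the root of a Schröder tree. -/
noncomputable def branchings (m : ℕ) : Finset (List PTree) :=
  (schroderForests m).filter fun cs => 2 ≤ cs.length

lemma mem_schroderTrees {t : PTree} : t ∈ schroderTrees m ↔ t ∈ ST m :=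
  Set.Finite.mem_toFinset _

lemma mem_schroderForests : cs ∈ schroderForests m ↔ cs ∈ SchroderForest m :=
  Set.Finite.mem_toFinset _

lemma mem_branchings : cs ∈ branchings m ↔ cs ∈ SchroderForest m ∧ 2 ≤ cs.length := by
  rw [branchings, mem_filter, mem_schroderForests]

lemma ne_nil_of_mem_branchings (hcs : cs ∈ branchings m) : cs ≠ [] :=
  ne_nil_of_mem_schroderForest (mem_branchings.1 hcs).1

variable {M : Type*} [AddCommMonoid M]

lemma sum_branchings (m : ℕ) (F : List PTree → M) :
    ∑ cs ∈ branchings m, F cs =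
      ∑ k ∈ range m, ∑ c ∈ schroderTrees k, ∑ cs ∈ schroderForests (m - 1 - k), F (c :: cs) := by
  simp only [← sum_product']
  rw [sum_sigma']
  refine (sum_nbij (fun x : (_ : ℕ) × PTree × List PTree => x.2.1 :: x.2.2) ?_ ?_ ?_
    fun _ _ => rfl).symm
  · rintro ⟨k, c, cs⟩ hx
    simp only [mem_sigma, mem_range, mem_product, mem_schroderTrees, mem_schroderForests] at hx
    have hcs := ne_nil_of_mem_schroderForest hx.2.2
    exact mem_branchings.2 ⟨(cons_mem_schroderForest hcs).2 ⟨k, hx⟩, length_two_le_iff.2 hcs⟩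
  · rintro ⟨k, c, cs⟩ hx ⟨k', c', cs'⟩ hx' heq
    simp only [coe_sigma, Set.mem_sigma_iff, mem_coe, mem_product, mem_schroderTrees] at hx hx'
    obtain ⟨rfl, rfl⟩ := List.cons.inj heq
    obtain rfl : k = k' := Nat.succ_injective (hx.2.1.2.symm.trans hx'.2.1.2)
    rfl
  · rintro (_ | ⟨c, cs⟩) hcs
    · exact absurd rfl (ne_nil_of_mem_branchings hcs)
    · obtain ⟨hforest, hlen⟩ := mem_branchings.1 hcs
      obtain ⟨k, hk⟩ := (cons_mem_schroderForest (length_two_le_iff.1 hlen)).1 hforest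
      refine ⟨⟨k, c, cs⟩, ?_, rfl⟩
      simpa only [coe_sigma, Set.mem_sigma_iff, mem_coe, mem_product, mem_range, mem_schroderTrees,
        mem_schroderForests] using hk

lemma sum_schroderForests (m : ℕ) (F : List PTree → M) :
    ∑ cs ∈ schroderForests m, F cs =
      ∑ c ∈ schroderTrees m, F [c] + ∑ cs ∈ branchings m, F cs := by
  rw [← sum_filter_not_add_sum_filter _ fun cs => 2 ≤ cs.length, branchings]
  refine congrArg (· + _) (sum_nbij (fun c => [c]) (fun c hc => ?_)
    (fun _ _ _ _ heq => List.singleton_injective heq) (fun cs hcs => ?_) fun _ _ => rfl).symm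
  · rw [mem_filter, mem_schroderForests, singleton_mem_schroderForest]
    exact ⟨mem_schroderTrees.1 hc, by simp⟩
  · rw [mem_coe, mem_filter, mem_schroderForests] at hcs
    obtain ⟨c, rfl⟩ : ∃ c, cs = [c] := by
      have := List.length_pos_iff.2 (ne_nil_of_mem_schroderForest hcs.1)
      exact List.length_eq_one_iff.1 (by omega)
    exact ⟨c, mem_schroderTrees.2 (singleton_mem_schroderForest.1 hcs.1), rfl⟩

lemma sum_schroderTrees (m : ℕ) (F : PTree → M) :
    ∑ t ∈ schroderTrees m, F t =
      (if m = 0 then F leaf else 0) + ∑ cs ∈ branchings m, F (node cs) := by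
  classical
  have hleaf : ∑ t ∈ schroderTrees m with t = leaf, F t = if m = 0 then F leaf else 0 := by
    simp only [sum_filter, sum_ite_eq', mem_schroderTrees, leaf_mem_ST]
  rw [← sum_filter_add_sum_filter_not _ (· = leaf), hleaf]
  refine congrArg (_ + ·) (sum_nbij node (fun cs hcs => ?_) (fun _ _ _ _ heq => by
    injection heq) (fun t ht => ?_) fun _ _ => rfl).symm
  · have hne := ne_nil_of_mem_branchings hcs
    rw [mem_filter, mem_schroderTrees, node_mem_ST hne]
    exact ⟨mem_branchings.1 hcs, fun heq => hne (by injection heq)⟩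
  · obtain ⟨cs⟩ := t
    rw [mem_coe, mem_filter, mem_schroderTrees] at ht
    have hne : cs ≠ [] := fun heq => ht.2 (by rw [heq])
    exact ⟨cs, mem_branchings.2 ((node_mem_ST hne).1 ht.1), rfl⟩

end SchroderForests

section SchroderSums

variable {K : Type*} [Field K]

lemma sum_powerset_Ico {M : Type*} [AddCommMonoid M] (F : Finset ℕ → M) (g m : ℕ) :
    ∑ S ∈ (Ico g (g + m)).powerset, F S =
      F ∅ + ∑ k ∈ range m, ∑ S ∈ (Ico (g + k + 1) (g + m)).powerset, F (insert (g + k) S) := by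
  induction m generalizing g with
  | zero => simp
  | succ m ih =>
    have hsplit : Ico g (g + (m + 1)) = insert g (Ico (g + 1) (g + 1 + m)) := by
      rw [add_right_comm, add_assoc, insert_Ico_add_one_left_eq_Ico (by omega)]
    have hg : g ∉ Ico (g + 1) (g + 1 + m) := by simp
    rw [hsplit, sum_powerset_insert hg, ih, sum_range_succ', add_zero, add_assoc]
    simp only [add_assoc, add_comm 1]

/-- The sum over `p ∪ S`, where `S` is a set of positions in `[g, g + m)`, of the value of `f` at
`p ∪ S` times the weight at `t` of the noncrossing partitions of the positions not in `S`. Here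
`p` is the part to the left of `g` of an outer block. -/
noncomputable def rootBlockSum (f h : Finset ℕ → K) (t : K) (p : Finset ℕ) (g m : ℕ) : K :=
  ∑ S ∈ (Ico g (g + m)).powerset, f (p ∪ S) * (ncPoly h (Ico g (g + m) \ S) S).eval t

/-- The sum over the forests `cs` of Schröder trees with `m + 1` leaves of the value of `f` at `p`
together with the sectors separating the trees of `cs`, times the number of strict maps of `cs` to
`Fin N` and the block product of `cs`. -/
noncomputable def forestSum (f : Finset ℕ → K) (N : ℕ) (p : Finset ℕ) (g m : ℕ) : K :=
  ∑ cs ∈ schroderForests m,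
    f (p ∪ blockAt g (node cs) []) * (forestStrictMapCount cs N * forestBlockProd f g cs)

/-- The sum over the Schröder trees with `m + 1` leaves of the number of strict maps of the
skeleton to `Fin N` times the block product. -/
noncomputable def treeSum (f : Finset ℕ → K) (N g m : ℕ) : K :=
  ∑ t ∈ schroderTrees m, strictMapCount (SkeletonLT t) N * blockProd f g t

lemma forestSum_eq (f : Finset ℕ → K) (N : ℕ) (p : Finset ℕ) (g m : ℕ) :
    forestSum f N p g m = f p * treeSum f N g m +
      ∑ k ∈ range m, treeSum f N g k *
        forestSum f N (insert (g + k) p) (g + k + 1) (m - 1 - k) := by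
  rw [forestSum, sum_schroderForests, sum_branchings, treeSum, mul_sum]
  congr 1
  · refine sum_congr rfl fun c _ => ?_
    rw [blockAt_singleton_nil, union_empty, forestStrictMapCount_cons, forestStrictMapCount_nil,
      forestBlockProd_cons, forestBlockProd_nil, mul_one, mul_one]
  · refine sum_congr rfl fun k _ => ?_
    rw [treeSum, forestSum, sum_mul_sum]
    refine sum_congr rfl fun c hc => sum_congr rfl fun cs hcs => ?_
    have hleaves : numLeaves c = k + 1 := (mem_schroderTrees.1 hc).2
    have hne := ne_nil_of_mem_schroderForest (mem_schroderForests.1 hcs)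
    rw [blockAt_cons_nil g c hne, forestStrictMapCount_cons, forestBlockProd_cons, hleaves,
      union_insert, insert_union, ← add_assoc, Nat.add_sub_cancel, Nat.cast_mul]
    ring

lemma treeSum_zero (f : Finset ℕ → K) (g m : ℕ) : treeSum f 0 g m = if m = 0 then 1 else 0 := by
  rw [treeSum, sum_schroderTrees, strictMapCount_leaf, blockProd_leaf, Nat.cast_one, mul_one,
    add_eq_left]
  refine sum_eq_zero fun cs hcs => ?_
  rw [strictMapCount_node_zero (ne_nil_of_mem_branchings hcs), Nat.cast_zero, zero_mul]

lemma treeSum_succ {f : Finset ℕ → K} (hf : f ∅ = 1) (N g m : ℕ) :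
    treeSum f (N + 1) g m = forestSum f N ∅ g m := by
  have hsingleton (c : PTree) : f (∅ ∪ blockAt g (node [c]) []) *
      (forestStrictMapCount [c] N * forestBlockProd f g [c]) =
        strictMapCount (SkeletonLT c) N * blockProd f g c := by
    rw [blockAt_singleton_nil, union_empty, hf, one_mul, forestStrictMapCount_cons,
      forestStrictMapCount_nil, forestBlockProd_cons, forestBlockProd_nil, mul_one, mul_one]
  rw [forestSum, sum_schroderForests, treeSum, sum_schroderTrees]
  simp only [hsingleton]
  rw [sum_schroderTrees, strictMapCount_leaf, strictMapCount_leaf, add_assoc, ← sum_add_distrib]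
  refine congrArg (_ + ·) (sum_congr rfl fun cs hcs => ?_)
  have hne := ne_nil_of_mem_branchings hcs
  rw [strictMapCount_node_succ hne, blockProd_node _ _ hne, empty_union, Nat.cast_add]
  ring

variable [CharZero K] (h : Finset ℕ → K)

lemma rootBlockSum_eq (f : Finset ℕ → K) (t : K) (p : Finset ℕ) (g m : ℕ) :
    rootBlockSum f h t p g m = f p * (ncPoly h (Ico g (g + m)) ∅).eval t +
      ∑ k ∈ range m, (ncPoly h (Ico g (g + k)) ∅).eval t *
        rootBlockSum f h t (insert (g + k) p) (g + k + 1) (m - 1 - k) := by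
  rw [rootBlockSum, sum_powerset_Ico, union_empty, sdiff_empty]
  refine congrArg (_ + ·) (sum_congr rfl fun k hk => ?_)
  rw [mem_range] at hk
  rw [rootBlockSum, mul_sum, show g + k + 1 + (m - 1 - k) = g + m by omega]
  refine sum_congr rfl fun S hS => ?_
  have hlt : ∀ s ∈ S, g + k < s := fun s hs => (mem_Ico.1 (mem_powerset.1 hS hs)).1
  have hsplit :
      Ico g (g + m) \ insert (g + k) S = Ico g (g + k) ∪ (Ico (g + k + 1) (g + m) \ S) := by
    ext i
    simp only [mem_sdiff, mem_insert, mem_union, mem_Ico]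
    by_cases hi : i ∈ S
    · have := hlt i hi
      simp only [hi, or_true, not_true, and_false, or_false, false_iff]
      omega
    · simp only [hi, or_false, not_false_iff, and_true]
      omega
  rw [hsplit, ncPoly_union_insert h (fun y hy => (mem_Ico.1 hy).2)
    (fun z hz => (mem_Ico.1 (mem_sdiff.1 hz).1).1) hlt, eval_mul, union_insert, insert_union]
  ring

lemma rootBlockSum_eq_forestSum {f : Finset ℕ → K} {N : ℕ}
    (hN : ∀ g m, (ncPoly h (Ico g (g + m)) ∅).eval (N : K) = treeSum f N g m) (p : Finset ℕ)
    (g m : ℕ) : rootBlockSum f h N p g m = forestSum f N p g m := by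
  induction m using Nat.strong_induction_on generalizing p g with
  | _ m ih =>
    rw [rootBlockSum_eq, forestSum_eq, hN, add_right_inj]
    refine sum_congr rfl fun k hk => ?_
    rw [mem_range] at hk
    rw [hN, ih _ (by omega)]

theorem eval_natCast_ncPoly_Ico (N g m : ℕ) :
    (ncPoly h (Ico g (g + m)) ∅).eval (N : K) = treeSum (moment h) N g m := by
  induction N generalizing g m with
  | zero => simp [eval_zero_ncPoly, treeSum_zero]
  | succ N ih =>
    rw [Nat.cast_succ, eval_add_one_ncPoly, treeSum_succ (moment_empty h),
      ← rootBlockSum_eq_forestSum h ih, rootBlockSum]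
    simp only [empty_union]

theorem ncPoly_range (n : ℕ) :
    ncPoly h (range n) ∅ =
      ∑ t ∈ schroderTrees n, strictOrderPoly (SkeletonLT t) K * C (blockProd (moment h) 0 t) := by
  refine eq_of_infinite_eval_eq _ _
    ((Set.infinite_range_of_injective Nat.cast_injective).mono ?_)
  rintro _ ⟨N, rfl⟩
  have hN := eval_natCast_ncPoly_Ico h N 0 n
  rw [zero_add, ← range_eq_Ico] at hN
  simp only [Set.mem_ofPred_eq, hN, treeSum, eval_finsetSum, eval_mul, eval_C,
    eval_natCast_strictOrderPoly]

theorem apply_range_eq_sum_schroderTrees (h : Finset ℕ → ℂ) {n : ℕ} (hn : n ≠ 0) :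
    h (range n) = ∑ t ∈ schroderTrees n, omegaSk t * blockProd (moment h) 0 t := by
  rw [← eval_zero_derivative_ncPoly h (nonempty_range_iff.2 hn), ncPoly_range, derivative_sum,
    eval_finsetSum]
  refine sum_congr rfl fun t _ => ?_
  rw [derivative_mul, derivative_C, mul_zero, add_zero, eval_mul, eval_C,
    eval_zero_derivative_strictOrderPoly_skeletonLT]

end SchroderSums

section TreePartition

lemma eq_of_part_eq {α : Type*} [DecidableEq α] {s : Finset α} {P Q : Finpartition s}
    (h : ∀ a ∈ s, P.part a = Q.part a) : P = Q := by
  have himage (R : Finpartition s) : R.part '' s = R.parts :=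
    R.part_surjOn.image_eq_of_mapsTo fun _ ha => R.part_mem.2 ha
  exact Finpartition.ext (coe_injective (by rw [← himage, ← himage, Set.image_congr h]))

open Classical in
/-- The noncrossing partition `π(t)` of the sectors of a Schröder tree `t ∈ ST n`: sectors with the
same owner are equivalent. -/
noncomputable def treePartition (n : ℕ) (t : PTree) : NPart n :=
  Finpartition.ofSetoid (Setoid.ker fun i : Fin n => {v | OwnsSector t v i})

variable {n : ℕ} {t : PTree}

lemma exists_owner (ht : t ∈ ST n) (i : Fin n) : ∃ v, OwnsSector t v i :=
  exists_ownsSector (by rw [ht.2]; omega)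

lemma mem_part_treePartition (ht : t ∈ ST n) {i j : Fin n} :
    i ∈ (treePartition n t).part j ↔ SameOwner t i j := by
  classical
  rw [treePartition, Finpartition.mem_part_ofSetoid_iff_rel, Setoid.ker_def]
  constructor
  · intro heq
    obtain ⟨v, hv⟩ := exists_owner ht j
    exact ⟨v, heq.subset hv, hv⟩
  · rintro ⟨v, hi, hj⟩
    exact Set.ext fun w => ⟨fun hw => hj.unique hw ▸ hi, fun hw => hi.unique hw ▸ hj⟩

lemma treePartEq_iff (ht : t ∈ ST n) {π : NPart n} : TreePartEq t π ↔ treePartition n t = π := by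
  simp only [TreePartEq, ← mem_part_treePartition ht, ← Finpartition.mem_part_iff_exists]
  exact ⟨fun h => eq_of_part_eq fun j _ => Finset.ext fun i => h i j, by rintro rfl i j; rfl⟩

lemma map_part_treePartition (ht : t ∈ ST n) {v : List ℕ} {i : Fin n} (hi : OwnsSector t v i) :
    ((treePartition n t).part i).map Fin.valEmbedding = blockAt 0 t v := by
  ext j
  rw [mem_map, mem_blockAt, Nat.sub_zero, and_iff_right (Nat.zero_le j)]
  constructor
  · rintro ⟨j, hj, rfl⟩
    obtain ⟨w, hw, hwi⟩ := (mem_part_treePartition ht).1 hj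
    exact hi.unique hwi ▸ hw
  · intro hj
    have hlt := hj.add_two_le
    rw [ht.2] at hlt
    exact ⟨⟨j, by omega⟩, (mem_part_treePartition ht).2 ⟨v, hj, hi⟩, rfl⟩

lemma image_parts_treePartition (ht : t ∈ ST n) :
    map Fin.valEmbedding '' ((treePartition n t).parts : Set (Finset (Fin n))) =
      blockAt 0 t '' {v | IsInternalAt t v} := by
  ext S
  constructor
  · rintro ⟨V, hV, rfl⟩
    obtain ⟨i, hi⟩ := (treePartition n t).nonempty_of_mem_parts hV
    obtain ⟨v, hv⟩ := exists_owner ht i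
    refine ⟨v, hv.1, ?_⟩
    rw [← map_part_treePartition ht hv, Finpartition.part_eq_of_mem _ hV hi]
  · rintro ⟨v, hv, rfl⟩
    obtain ⟨i, hi⟩ := exists_ownsSector_of_isInternalAt ht.1 hv
    have hlt := hi.add_two_le
    rw [ht.2] at hlt
    lift i to Fin n using by omega
    exact ⟨_, (treePartition n t).part_mem.2 (mem_univ i), map_part_treePartition ht hi⟩

lemma isNoncrossing_treePartition (ht : t ∈ ST n) : IsNoncrossing (treePartition n t) := by
  intro a b c d hab hbc hcd V hV W hW haV hcV hbW hdW
  have hsame {U : Finset (Fin n)} {i j : Fin n} (hU : U ∈ (treePartition n t).parts) (hi : i ∈ U)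
      (hj : j ∈ U) : SameOwner t i j :=
    (mem_part_treePartition ht).1 ((treePartition n t).mem_part_iff_exists.2 ⟨U, hU, hi, hj⟩)
  obtain ⟨v, hva, hvc⟩ := hsame hV haV hcV
  obtain ⟨w, hwb, hwd⟩ := hsame hW hbW hdW
  have hvb : SectorIn t v b := ⟨hva.2.1.1.trans hab.le, by have := hvc.2.1.2; omega⟩
  have hwc : SectorIn t w c := ⟨hwb.2.1.1.trans hbc.le, by have := hwd.2.1.2; omega⟩
  have hvw : v = w := by
    by_contra hne
    rcases hvb.prefix_or_prefix hva.1 hwb.1 hwb.2.1 with hpre | hpre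
    · exact hvc.2.2 w hwb.1 hpre (Ne.symm hne) hwc
    · exact hwb.2.2 v hva.1 hpre hne hvb
  subst hvw
  have hb := (mem_part_treePartition ht).2 ⟨v, hwb, hva⟩
  rw [Finpartition.part_eq_of_mem _ hV haV] at hb
  exact (treePartition n t).eq_of_mem_parts hV hW hb hbW

lemma blockApply_treePartition {A : Type*} (f : List A → ℂ) (a : ℕ → A) (ht : t ∈ ST n) :
    blockApply f (fun i : Fin n => a i) (treePartition n t) = blockProd (wordFn f a) 0 t := by
  calc blockApply f (fun i : Fin n => a i) (treePartition n t)
    _ = ∏ V ∈ (treePartition n t).parts, wordFn f a (V.map Fin.valEmbedding) :=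
      prod_congr rfl fun V _ => (wordFn_map f a (Fin.valOrderEmb n) V).symm
    _ = ∏ᶠ S ∈ map Fin.valEmbedding '' ((treePartition n t).parts : Set (Finset (Fin n))),
          wordFn f a S := by
      rw [finprod_mem_image (map_injective Fin.valEmbedding).injOn, finprod_mem_coe_finset]
    _ = blockProd (wordFn f a) 0 t := by
      rw [image_parts_treePartition ht, finprod_mem_image (injOn_blockAt ht.1 0), blockProd]

lemma finsum_noncrossing_eq_sum_schroderTrees {R : Type*} [NonUnitalNonAssocSemiring R]
    (F : NPart n → R) (ω : PTree → R) :
    ∑ᶠ π ∈ {π : NPart n | IsNoncrossing π},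
        (∑ᶠ t ∈ {t ∈ ST n | TreePartEq t π}, ω t) * F π =
      ∑ t ∈ schroderTrees n, ω t * F (treePartition n t) := by
  classical
  have hfiber (π : NPart n) : {t ∈ ST n | TreePartEq t π} =
      ({t ∈ schroderTrees n | treePartition n t = π} : Finset PTree) := by
    ext t
    rw [coe_filter, Set.mem_ofPred_eq, Set.mem_ofPred_eq, mem_schroderTrees]
    exact and_congr_right fun ht => treePartEq_iff ht
  have hfinite : {π : NPart n | IsNoncrossing π}.Finite := Set.toFinite _
  rw [finsum_mem_eq_finite_toFinset_sum _ hfinite,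
    ← sum_fiberwise_of_maps_to (g := treePartition n) (t := hfinite.toFinset)]
  · refine sum_congr rfl fun π _ => ?_
    rw [hfiber, finsum_mem_coe_finset, sum_mul]
    exact sum_congr rfl fun t ht => by rw [(mem_filter.1 ht).2]
  · exact fun t ht => hfinite.mem_toFinset.2 (isNoncrossing_treePartition (mem_schroderTrees.1 ht))

end TreePartition

end PTree

open PTree MonotoneCumulants in
theorem monotone_cumulants_eq_sum_noncrossing_partitions_general {A : Type*} {f h : List A → ℂ}
    (hmc : ∀ m : ℕ, 1 ≤ m → ∀ a : Fin m → A, f (List.ofFn a) =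
      ∑ᶠ π ∈ {π : NPart m | IsNoncrossing π}, (forestFactorial π : ℂ)⁻¹ * blockApply h a π)
    {n : ℕ} (hn : 1 ≤ n) (a : Fin n → A) :
    h (List.ofFn a) =
      ∑ᶠ π ∈ {π : NPart n | IsNoncrossing π},
        (∑ᶠ t ∈ {t ∈ ST n | TreePartEq t π}, omegaSk t) * blockApply f a π := by
  obtain ⟨b, rfl⟩ : ∃ b : ℕ → A, (fun i : Fin n => b i) = a :=
    ⟨Function.extend Fin.val a fun _ => a ⟨0, hn⟩, funext (Fin.val_injective.extend_apply a _)⟩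
  calc h (List.ofFn fun i : Fin n => b i)
    _ = wordFn h b (Finset.range n) := (wordFn_range h b n).symm
    _ = ∑ t ∈ schroderTrees n, omegaSk t * blockProd (moment (wordFn h b)) 0 t :=
      apply_range_eq_sum_schroderTrees _ (Nat.one_le_iff_ne_zero.1 hn)
    _ = ∑ t ∈ schroderTrees n,
          omegaSk t * blockApply f (fun i : Fin n => b i) (treePartition n t) := by
      refine Finset.sum_congr rfl fun t ht => ?_
      have hST := mem_schroderTrees.1 ht
      rw [blockApply_treePartition f b hST,
        blockProd_congr 0 hST.1 fun S hS => moment_wordFn hmc b hS]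
    _ = _ := (finsum_noncrossing_eq_sum_schroderTrees _ _).symm

/-- Monotone cumulants in terms of moments, grouped by noncrossing
partitions: `h_n(a_1,…,a_n) = Σ_{π ∈ NC(n)} α(π) φ_π(a_1,…,a_n)` where
`α(π) = Σ_{t ∈ ST(n), π(t) = π} ω(sk(t))`. -/
theorem monotone_cumulants_eq_sum_noncrossing_partitions
    (A : Type*) [Ring A] [Algebra ℂ A] (φ : A →ₗ[ℂ] ℂ) (hφ : φ 1 = 1)
    (h : List A → ℂ) (hmc : MonotoneMC (fun x => φ x) h)
    (n : ℕ) (hn : 1 ≤ n) (a : Fin n → A) :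
    h (List.ofFn a) =
      ∑ᶠ π ∈ {π : NPart n | IsNoncrossing π},
        (∑ᶠ t ∈ {t ∈ PTree.ST n | TreePartEq t π}, PTree.omegaSk t) *
          momApply (fun x => φ x) a π :=
  monotone_cumulants_eq_sum_noncrossing_partitions_general (f := fun l => φ l.prod) hmc hn a
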